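/- In every 4-connected graph with δ ≥ α, the circumference satisfies c ≥ min{n, 4δ − κ − 4}. -/

import Mathlib

open SimpleGraph

variable {V : Type*}

/-- `G` is `k`-connected: more than `k` vertices and removing fewer than `k`
vertices leaves a connected graph. -/
def KConnected (G : SimpleGraph V) [Fintype V] (k : ℕ) : Prop :=
  k < Fintype.card V ∧
    ∀ S : Finset V, S.card < k → (G.induce ((↑S : Set V)ᶜ)).Connected

/-- vertex connectivity `κ`. -/
noncomputable def connectivity (G : SimpleGraph V) [Fintype V] : ℕ :=
  sSup {k | KConnected G k}

/-- independence number `α`. -/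
noncomputable def indepNumber (G : SimpleGraph V) [Fintype V] : ℕ :=
  sSup {k | ∃ s : Finset V, (∀ u ∈ s, ∀ v ∈ s, ¬ G.Adj u v) ∧ s.card = k}

/-- circumference `c`: length of a longest cycle. -/
noncomputable def circumference (G : SimpleGraph V) [Fintype V] : ℕ :=
  sSup {n | ∃ (v : V) (w : G.Walk v v), w.IsCycle ∧ w.length = n}

/-- `w` is a longest cycle of `G`. -/
def IsLongestCycle {G : SimpleGraph V} {v : V} (w : G.Walk v v) : Prop :=
  w.IsCycle ∧ ∀ (u : V) (w' : G.Walk u u), w'.IsCycle → w'.length ≤ w.length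

/-- dominating cycle: every edge has an endpoint on the cycle. -/
def IsDominatingCycle {G : SimpleGraph V} {v : V} (w : G.Walk v v) : Prop :=
  w.IsCycle ∧ ∀ x y, G.Adj x y → x ∈ w.support ∨ y ∈ w.support

/-- generalized cycle of length `n` with vertex set `W`: single vertices are
cycles of length 1, edges are cycles of length 2. -/
def ExtCycle (G : SimpleGraph V) (W : Set V) (n : ℕ) : Prop :=
  (n = 1 ∧ ∃ v : V, W = {v}) ∨
  (n = 2 ∧ ∃ u v : V, G.Adj u v ∧ W = {u, v}) ∨
  (3 ≤ n ∧ ∃ (v : V) (w : G.Walk v v), w.IsCycle ∧ w.length = n ∧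
      W = {x | x ∈ w.support})

/-- `p̄`: the length of a longest path in `G \ C`. -/
noncomputable def pathBar (G : SimpleGraph V) [Fintype V] {v : V} (w : G.Walk v v) : ℕ :=
  sSup {n | ∃ (a b : {x : V | x ∉ w.support})
      (p : (G.induce {x : V | x ∉ w.support}).Walk a b), p.IsPath ∧ p.length = n}

/-- `c̄`: the length of a longest (generalized) cycle in `G \ C`. -/
noncomputable def cycBar (G : SimpleGraph V) [Fintype V] {v : V} (w : G.Walk v v) : ℕ :=
  sSup {n | ∃ W, ExtCycle (G.induce {x : V | x ∉ w.support}) W n}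

/-- `CD_m`-cycle: every (generalized) cycle of length at least `m` meets `w`. -/
def IsCDCycle (G : SimpleGraph V) {v : V} (w : G.Walk v v) (m : ℕ) : Prop :=
  w.IsCycle ∧ ∀ (W : Set V) (n : ℕ), ExtCycle G W n → m ≤ n → ∃ x ∈ W, x ∈ w.support

/-- Every proper nonempty part of `W` sends an edge to the rest of `W`. -/
def SetConnected (G : SimpleGraph V) (W : Finset V) : Prop :=
  ∀ A ⊆ W, A.Nonempty → A ≠ W → ∃ u ∈ A, ∃ v ∈ W, v ∉ A ∧ G.Adj u v

/-- `l` lists the vertices of a path of `G` inside `W` from `x` to `y`. -/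
structure IsPathIn (G : SimpleGraph V) (W : Finset V) (l : List V) (x y : V) : Prop where
  nodup : l.Nodup
  chain : l.IsChain G.Adj
  head : l.head? = some x
  last : l.getLast? = some y
  mem : ∀ v ∈ l, v ∈ W

namespace IsPathIn

variable {G : SimpleGraph V} {W W₁ W₂ : Finset V} {l l₁ l₂ : List V} {x y z b : V}

theorem singleton (hx : x ∈ W) : IsPathIn G W [x] x x :=
  ⟨by simp, by simp, by simp, by simp, by simpa using hx⟩

theorem mono (h : IsPathIn G W₁ l x y) (hW : W₁ ⊆ W₂) : IsPathIn G W₂ l x y :=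
  ⟨h.nodup, h.chain, h.head, h.last, fun v hv => hW (h.mem v hv)⟩

theorem reverse (h : IsPathIn G W l x y) : IsPathIn G W l.reverse y x :=
  ⟨by simpa using h.nodup, by
    rw [List.isChain_reverse]
    exact h.chain.imp fun _ _ hab => hab.symm, by simpa using h.last, by simpa using h.head,
    by simpa using h.mem⟩

theorem length_pos (h : IsPathIn G W l x y) : 1 ≤ l.length := by
  have := h.head
  cases l <;> simp_all

theorem cons (h : IsPathIn G W l y z) (hx : x ∈ W) (hxl : x ∉ l) (hxy : G.Adj x y) :
    IsPathIn G W (x :: l) x z := by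
  refine ⟨by simp [hxl, h.nodup], ?_, by simp, ?_, by simpa [hx] using h.mem⟩
  · rw [List.isChain_cons]
    exact ⟨by simp [h.head, hxy], h.chain⟩
  · simp [List.getLast?_cons, h.last]

theorem exists_join [DecidableEq V] (h₁ : IsPathIn G W₁ l₁ x b) (h₂ : IsPathIn G W₂ l₂ b y)
    (hW : ∀ v ∈ W₁, v ∈ W₂ → v = b) :
    ∃ l, IsPathIn G (W₁ ∪ W₂) l x y ∧ l.length + 1 = l₁.length + l₂.length := by
  obtain _ | ⟨a, t⟩ := l₂
  · simpa using h₂.head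
  obtain rfl : a = b := by simpa using h₂.head
  have hn := h₂.nodup
  have hc := h₂.chain
  have hl := h₂.last
  rw [List.nodup_cons] at hn
  rw [List.isChain_cons] at hc
  refine ⟨l₁ ++ t, ⟨?_, ?_, ?_, ?_, ?_⟩, by simp; omega⟩
  · refine List.nodup_append.2 ⟨h₁.nodup, hn.2, fun u hu v hv huv => ?_⟩
    subst huv
    exact hn.1 (hW u (h₁.mem u hu) (h₂.mem u (by simp [hv])) ▸ hv)
  · refine List.isChain_append.2 ⟨h₁.chain, hc.2, fun u hu v hv => ?_⟩
    rw [h₁.last] at hu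
    obtain rfl : a = u := by simpa using hu
    exact hc.1 v hv
  · simp [h₁.head]
  · obtain _ | ⟨a', t'⟩ := t
    · simpa [h₁.last] using hl
    · rw [List.getLast?_cons_cons] at hl
      simp [hl]
  · intro v hv
    rcases List.mem_append.1 hv with hv | hv
    · exact Finset.mem_union_left _ (h₁.mem v hv)
    · exact Finset.mem_union_right _ (h₂.mem v (by simp [hv]))

theorem exists_initial_path (h : IsPathIn G W l x y) {v : V} (hv : v ∈ l) :
    ∃ l', IsPathIn G W l' x v := by
  obtain ⟨s, t, rfl⟩ := List.append_of_mem hv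
  have e : s ++ v :: t = (s ++ [v]) ++ t := by simp
  have hc := h.chain
  have hn := h.nodup
  have hh := h.head
  rw [e] at hc hn hh
  refine ⟨s ++ [v], (List.nodup_append.1 hn).1, (List.isChain_append.1 hc).1, ?_, by simp,
    fun u hu => h.mem u (by rw [e]; exact List.mem_append_left _ hu)⟩
  cases s <;> simpa using hh

end IsPathIn

namespace SetConnected

variable {G : SimpleGraph V} {W A : Finset V} {b x z : V}

theorem exists_path (hW : SetConnected G W) (hx : x ∈ W) (hz : z ∈ W) :
    ∃ l, IsPathIn G W l x z := by
  classical
  by_contra hcon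
  obtain ⟨u, hu, v, hvW, hvA, huv⟩ := hW (W.filter fun v => ∃ l, IsPathIn G W l x v)
    (Finset.filter_subset _ _) ⟨x, by simpa [hx] using ⟨_, IsPathIn.singleton hx⟩⟩
    (fun h => hcon (Finset.mem_filter.1 (h.symm ▸ hz : z ∈ W.filter _)).2)
  obtain ⟨huW, l, hl⟩ := Finset.mem_filter.1 hu
  have hv : ¬ ∃ l, IsPathIn G W l x v := fun h => hvA (Finset.mem_filter.2 ⟨hvW, h⟩)
  have hvl : v ∉ l := fun h => hv (hl.exists_initial_path h)
  exact hv ⟨_, ((hl.reverse.cons hvW (by simpa using hvl) huv.symm).reverse)⟩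

/-- A union of components of `W - b`, together with `b`, is connected. -/
theorem insert_of_closed [DecidableEq V] (hW : SetConnected G W) (hb : b ∈ W)
    (hA : A ⊆ W.erase b)
    (hcl : ∀ u ∈ A, ∀ v ∈ W.erase b, v ∉ A → ¬ G.Adj u v) :
    SetConnected G (insert b A) := by
  have key : ∀ B ⊆ A, B.Nonempty → ∃ u ∈ B, ∃ v ∈ insert b A, v ∉ B ∧ G.Adj u v := by
    intro B hB hne
    have hbB : b ∉ B := fun h => by simpa using hA (hB h)
    obtain ⟨u, hu, v, hv, hvB, huv⟩ := hW B (fun a ha => Finset.mem_of_mem_erase (hA (hB ha))) hne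
      (fun h => hbB (h ▸ hb))
    refine ⟨u, hu, v, ?_, hvB, huv⟩
    by_contra hvA
    rw [Finset.mem_insert, not_or] at hvA
    exact hcl u (hB hu) v (Finset.mem_erase.2 ⟨hvA.1, hv⟩) hvA.2 huv
  intro B hB hne hBne
  by_cases hbB : b ∈ B
  · obtain ⟨u, hu, v, hv, hvB, huv⟩ := key (insert b A \ B)
      (fun a ha => by
        rw [Finset.mem_sdiff, Finset.mem_insert] at ha
        rcases ha.1 with rfl | h
        · exact absurd hbB ha.2
        · exact h)
      (by
        rw [Finset.sdiff_nonempty]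
        exact fun h => hBne (Finset.Subset.antisymm hB h))
    rw [Finset.mem_sdiff] at hu hvB
    exact ⟨v, by tauto, u, hu.1, hu.2, huv.symm⟩
  · exact key B (fun a ha => by
      rcases Finset.mem_insert.1 (hB ha) with rfl | h
      · exact absurd ha hbB
      · exact h) hne

end SetConnected

/-- The number of neighbours of `x` in `W`. -/
def degIn (G : SimpleGraph V) [DecidableRel G.Adj] (W : Finset V) (x : V) : ℕ :=
  (W.filter fun v => G.Adj x v).card

section LongPaths

variable {G : SimpleGraph V} [DecidableRel G.Adj] {W : Finset V} {x z : V}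

theorem degIn_mono {W₁ W₂ : Finset V} (h : W₁ ⊆ W₂) (x : V) : degIn G W₁ x ≤ degIn G W₂ x :=
  Finset.card_le_card (Finset.filter_subset_filter _ h)

theorem degIn_pos (hW : SetConnected G W) (hx : x ∈ W) (hz : z ∈ W) (hxz : x ≠ z) :
    1 ≤ degIn G W x := by
  obtain ⟨u, hu, v, hv, -, huv⟩ := hW {x} (by simpa using hx) ⟨x, by simp⟩
    (fun h => hxz (Finset.mem_singleton.1 (h.symm ▸ hz : z ∈ ({x} : Finset V))).symm)
  obtain rfl : u = x := by simpa using hu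
  exact Finset.card_pos.2 ⟨v, by simp [hv, huv]⟩

variable [DecidableEq V]

theorem degIn_le_erase_add_one (W : Finset V) (x u : V) :
    degIn G W u ≤ degIn G (W.erase x) u + 1 := by
  unfold degIn
  rw [Finset.filter_erase]
  have := Finset.pred_card_le_card_erase (s := W.filter fun v => G.Adj u v) (a := x)
  omega

/-- Long paths to `z` from all vertices of a part `X` of `W` which is attached to the rest of `W`
by a single vertex `b`. -/
structure LongPathPart (G : SimpleGraph V) [DecidableRel G.Adj] (W : Finset V) (z : V)
    (X : Finset V) (b x₀ : V) : Prop where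
  subset : X ⊆ W
  z_notMem : z ∉ X
  b_mem : b ∈ W
  b_notMem : b ∉ X
  closed : ∀ u ∈ X, ∀ v ∈ W, G.Adj u v → v ∈ X ∨ v = b
  x₀_mem : x₀ ∈ X
  path : ∀ x ∈ X, ∃ l, IsPathIn G W l x z ∧ degIn G W x₀ + 1 ≤ l.length

theorem exists_long_path_of_part {X : Finset V} {b x₀ : V}
    (hW : ∀ b ∈ W, SetConnected G (W.erase b)) (hx : x ∈ W)
    (hX : LongPathPart G (W.erase x) z X b x₀) :
    ∃ l, IsPathIn G W l x z ∧ degIn G W x₀ + 1 ≤ l.length := by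
  have hbx := hX.b_mem
  rw [Finset.mem_erase] at hbx
  have hxX : x ∉ X := fun h => by simpa using hX.subset h
  obtain ⟨u, hu, v, hv, hvX, huv⟩ := hW b hbx.2 X
    (fun a ha => Finset.mem_erase.2 ⟨fun h => hX.b_notMem (h ▸ ha),
      Finset.mem_of_mem_erase (hX.subset ha)⟩) ⟨x₀, hX.x₀_mem⟩
    (fun h => hxX (h ▸ Finset.mem_erase.2 ⟨hbx.1.symm, hx⟩))
  rw [Finset.mem_erase] at hv
  have hvx : v = x := by
    by_contra hne
    rcases hX.closed u hu v (Finset.mem_erase.2 ⟨hne, hv.2⟩) huv with h | h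
    · exact hvX h
    · exact hv.1 h
  subst hvx
  obtain ⟨l, hl, hlen⟩ := hX.path u hu
  refine ⟨v :: l, (hl.mono (Finset.erase_subset _ _)).cons hx
    (fun h => by simpa using hl.mem _ h) huv.symm, ?_⟩
  have := degIn_le_erase_add_one (G := G) W v x₀
  simp only [List.length_cons]
  omega

/-- A part obtained in a union `A` of components of `W - b`, together with `b`, is attached to the
rest of `W` in the same way. -/
theorem LongPathPart.of_insert {A X : Finset V} {b b' x₀ : V}
    (hX : LongPathPart G (insert b A) b X b' x₀) (hA : insert b A ⊆ W)
    (hcl : ∀ u ∈ A, ∀ v ∈ W.erase b, v ∉ A → ¬ G.Adj u v) :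
    X ⊆ A ∧ (∀ u ∈ X, ∀ v ∈ W, G.Adj u v → v ∈ X ∨ v = b') ∧
      degIn G W x₀ = degIn G (insert b A) x₀ := by
  have hXA : X ⊆ A := fun a ha => by
    rcases Finset.mem_insert.1 (hX.subset ha) with rfl | h
    · exact absurd ha hX.z_notMem
    · exact h
  have hnb : ∀ u ∈ A, ∀ v ∈ W, G.Adj u v → v ∈ insert b A := by
    intro u hu v hv huv
    by_contra h
    rw [Finset.mem_insert, not_or] at h
    exact hcl u hu v (Finset.mem_erase.2 ⟨h.1, hv⟩) h.2 huv
  refine ⟨hXA, fun u hu v hv huv => hX.closed u hu v (hnb u (hXA hu) v hv huv) huv,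
    le_antisymm (Finset.card_le_card fun v hv => ?_) (degIn_mono hA _)⟩
  rw [Finset.mem_filter] at hv ⊢
  exact ⟨hnb x₀ (hXA hX.x₀_mem) v hv.1 hv.2, hv.2⟩

theorem exists_longPathPart (hW : SetConnected G W) (hz : z ∈ W) (hcard : 2 ≤ W.card) :
    ∃ X b x₀, LongPathPart G W z X b x₀ := by
  induction hn : W.card using Nat.strong_induction_on generalizing W z with
  | _ n ih =>
  subst hn
  by_cases hcut : ∀ b ∈ W, SetConnected G (W.erase b)
  · obtain ⟨x₀, hx₀, hmin⟩ := (W.erase z).exists_min_image (degIn G W)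
      (by rw [← Finset.card_pos, Finset.card_erase_of_mem hz]; omega)
    refine ⟨W.erase z, z, x₀, Finset.erase_subset _ _, by simp, hz, by simp, ?_, hx₀, ?_⟩
    · intro u _ v hv _
      by_cases h : v = z <;> simp [h, hv]
    · intro x hx
      obtain ⟨hxz, hxW⟩ := Finset.mem_erase.1 hx
      rcases hcard.eq_or_lt with h2 | h2
      · obtain ⟨l, hl⟩ := hW.exists_path hxW hz
        refine ⟨l, hl, ?_⟩
        have hd : degIn G W x₀ ≤ 1 := by
          have : (W.erase x₀).card = 1 := by
            rw [Finset.card_erase_of_mem (Finset.mem_of_mem_erase hx₀)]; omega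
          rw [← this]
          refine Finset.card_le_card fun v hv => ?_
          rw [Finset.mem_filter] at hv
          exact Finset.mem_erase.2 ⟨hv.2.ne', hv.1⟩
        have : 2 ≤ l.length := by
          have h1 := hl.head
          have h2 := hl.last
          rcases l with _ | ⟨a, _ | ⟨c, t⟩⟩
          · simp at h1
          · simp only [List.head?_cons, Option.some.injEq, List.getLast?_singleton] at h1 h2
            exact absurd (h1.symm.trans h2) hxz
          · simp
        omega
      · obtain ⟨X, b, y₀, hX⟩ := ih (W.erase x).card (Finset.card_erase_lt_of_mem hxW)
          (hcut x hxW) (Finset.mem_erase.2 ⟨Ne.symm hxz, hz⟩)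
          (by rw [Finset.card_erase_of_mem hxW]; omega) rfl
        obtain ⟨l, hl, hlen⟩ := exists_long_path_of_part hcut hxW hX
        refine ⟨l, hl, (Nat.add_le_add_right (hmin y₀ ?_) 1).trans hlen⟩
        exact Finset.mem_erase.2 ⟨fun h => hX.z_notMem (h ▸ hX.x₀_mem),
          Finset.mem_of_mem_erase (hX.subset hX.x₀_mem)⟩
  · push Not at hcut
    obtain ⟨b, hb, hnc⟩ := hcut
    obtain ⟨A, hAW, hAne, hAcl, hAlt, hzA⟩ : ∃ A ⊆ W.erase b, A.Nonempty ∧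
        (∀ u ∈ A, ∀ v ∈ W.erase b, v ∉ A → ¬ G.Adj u v) ∧ (W.erase b \ A).Nonempty ∧ z ∉ A := by
      unfold SetConnected at hnc
      push Not at hnc
      obtain ⟨A, hA, hne, hAne, hcl⟩ := hnc
      have hrest : (W.erase b \ A).Nonempty := by
        rw [Finset.sdiff_nonempty]
        exact fun h => hAne (Finset.Subset.antisymm hA h)
      by_cases hzA : z ∈ A
      · refine ⟨W.erase b \ A, Finset.sdiff_subset, hrest, ?_, ?_, by simp [hzA]⟩
        · intro u hu v hv hvA huv
          rw [Finset.mem_sdiff] at hu hvA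
          exact hcl v (by tauto) u hu.1 hu.2 huv.symm
        · rwa [Finset.sdiff_sdiff_eq_self hA]
      · exact ⟨A, hA, hne, hcl, hrest, hzA⟩
    have hbA : b ∉ A := fun h => by simpa using hAW h
    have hsub : insert b A ⊆ W := Finset.insert_subset hb (hAW.trans (Finset.erase_subset _ _))
    have hlt : (insert b A).card < W.card := by
      refine Finset.card_lt_card ⟨hsub, fun h => ?_⟩
      obtain ⟨a, ha⟩ := hAlt
      rw [Finset.mem_sdiff, Finset.mem_erase] at ha
      exact (Finset.mem_insert.1 (h ha.1.2)).elim ha.1.1 ha.2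
    obtain ⟨X, b', x₀, hX⟩ := ih _ hlt (hW.insert_of_closed hb hAW hAcl)
      (Finset.mem_insert_self b A)
      (by rw [Finset.card_insert_of_notMem hbA]; have := hAne.card_pos; omega) rfl
    obtain ⟨hXA, hXcl, hdeg⟩ := hX.of_insert hsub hAcl
    have hrest : SetConnected G (insert b (W.erase b \ A)) :=
      hW.insert_of_closed hb Finset.sdiff_subset (by
        intro u hu v hv hvA huv
        rw [Finset.mem_sdiff] at hu hvA
        exact hAcl v (by tauto) u hu.1 hu.2 huv.symm)
    obtain ⟨l₂, hl₂⟩ := hrest.exists_path (Finset.mem_insert_self _ _) (z := z) (by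
      rw [Finset.mem_insert, Finset.mem_sdiff, Finset.mem_erase]; tauto)
    refine ⟨X, b', x₀, hX.subset.trans hsub, fun h => hzA (hXA h), hsub hX.b_mem, hX.b_notMem,
      hXcl, hX.x₀_mem, ?_⟩
    intro x hx
    obtain ⟨l₁, hl₁, hlen⟩ := hX.path x hx
    obtain ⟨l, hl, hlen'⟩ := hl₁.exists_join hl₂ (fun v h1 h2 => by
      rw [Finset.mem_insert] at h1 h2
      rw [Finset.mem_sdiff] at h2
      tauto)
    refine ⟨l, hl.mono (Finset.union_subset hsub (Finset.insert_subset hb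
      (Finset.sdiff_subset.trans (Finset.erase_subset _ _)))), ?_⟩
    have := hl₂.length_pos
    omega

/-- In a graph without cut vertices, two distinct vertices are joined by a path at least as long as
the degree of some third vertex. -/
theorem exists_long_path (hW : ∀ b ∈ W, SetConnected G (W.erase b)) (hcard : 3 ≤ W.card)
    (hx : x ∈ W) (hz : z ∈ W) (hxz : x ≠ z) :
    ∃ x₀ ∈ W, x₀ ≠ x ∧ x₀ ≠ z ∧ ∃ l, IsPathIn G W l x z ∧ degIn G W x₀ + 1 ≤ l.length := by
  obtain ⟨X, b, x₀, hX⟩ := exists_longPathPart (hW x hx) (Finset.mem_erase.2 ⟨hxz.symm, hz⟩)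
    (by rw [Finset.card_erase_of_mem hx]; omega)
  have h := Finset.mem_erase.1 (hX.subset hX.x₀_mem)
  exact ⟨x₀, h.2, h.1, fun h => hX.z_notMem (h ▸ hX.x₀_mem), exists_long_path_of_part hW hx hX⟩

end LongPaths

section CyclicGaps

variable {c : ℕ}

theorem ZMod.exists_eq_add_natCast_of_ne [NeZero c] {i j : ZMod c} (h : i ≠ j) :
    ∃ d : ℕ, 1 ≤ d ∧ d < c ∧ j = i + d := by
  refine ⟨(j - i).val, ?_, ZMod.val_lt _, by simp⟩
  rw [Nat.one_le_iff_ne_zero, Ne, ZMod.val_eq_zero, sub_eq_zero]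
  exact h.symm

/-- Disjoint cyclic intervals have total length at most `c`. -/
theorem sum_le_of_cyclic_gaps [NeZero c] (M : Finset (ZMod c)) (w : ZMod c → ℕ)
    (hw : ∀ i ∈ M, ∀ t : ℕ, 1 ≤ t → t < w i → i + t ∉ M) : ∑ i ∈ M, w i ≤ c := by
  have hle : ∀ i ∈ M, ∀ j ∈ M, ∀ s t : ℕ, t < w j → s ≤ t → i + s = j + t → s = t := by
    intro i hi j hj s t ht hst h
    by_contra hne
    refine hw j hj (t - s) (by omega) (by omega) ?_
    have : j + ((t - s : ℕ) : ZMod c) = i := by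
      rw [Nat.cast_sub hst, ← add_sub_assoc, ← h, add_sub_cancel_right]
    rwa [this]
  have hinj : Set.InjOn (fun p : (_ : ZMod c) × ℕ => p.1 + (p.2 : ZMod c))
      (M.sigma fun i => Finset.range (w i)) := by
    rintro ⟨i, s⟩ hi ⟨j, t⟩ hj h
    simp only [Finset.coe_sigma, Set.mem_sigma_iff, Finset.mem_coe, Finset.mem_range] at hi hj h
    obtain rfl : s = t := by
      rcases le_total s t with hst | hst
      · exact hle i hi.1 j hj.1 s t hj.2 hst h
      · exact (hle j hj.1 i hi.1 t s hi.2 hst h.symm).symm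
    simpa using h
  have := Finset.card_le_card_of_injOn (t := Finset.univ) _
    (fun _ _ => Finset.mem_coe.2 (Finset.mem_univ _)) hinj
  simpa [ZMod.card] using this

/-- The distance from `i` to the next element of `M` in cyclic order. -/
noncomputable def gap (M : Finset (ZMod c)) (i : ZMod c) : ℕ :=
  sInf {t : ℕ | 1 ≤ t ∧ i + t ∈ M}

/-- The element of `M` following `i` in cyclic order. -/
noncomputable def next (M : Finset (ZMod c)) (i : ZMod c) : ZMod c :=
  i + (gap M i : ℕ)

variable {M N₁ N₂ : Finset (ZMod c)} {i : ZMod c}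

theorem gap_le {t : ℕ} (ht : 1 ≤ t) (h : i + t ∈ M) : gap M i ≤ t :=
  Nat.sInf_le ⟨ht, h⟩

/-- The elements of `N₁ ∪ N₂` such that one of the two sets contains the element and the other one
the next element. -/
noncomputable def transitions (N₁ N₂ : Finset (ZMod c)) : Finset (ZMod c) :=
  (N₁ ∪ N₂).filter fun i =>
    (i ∈ N₁ ∧ next (N₁ ∪ N₂) i ∈ N₂) ∨ (i ∈ N₂ ∧ next (N₁ ∪ N₂) i ∈ N₁)

theorem transitions_subset (N₁ N₂ : Finset (ZMod c)) : transitions N₁ N₂ ⊆ N₁ ∪ N₂ :=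
  Finset.filter_subset _ _

variable [NeZero c]

theorem gap_spec (hi : i ∈ M) : 1 ≤ gap M i ∧ next M i ∈ M :=
  Nat.sInf_mem (s := {t : ℕ | 1 ≤ t ∧ i + t ∈ M}) ⟨c, NeZero.one_le, by simpa using hi⟩

theorem gap_lt (hM : 2 ≤ M.card) : gap M i < c := by
  obtain ⟨j, hj, hne⟩ := Finset.exists_mem_ne hM i
  obtain ⟨d, hd, hdc, rfl⟩ := ZMod.exists_eq_add_natCast_of_ne hne.symm
  exact (gap_le hd hj).trans_lt hdc

theorem next_ne (hi : i ∈ M) (hM : 2 ≤ M.card) : next M i ≠ i := by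
  intro h
  have h0 : ((gap M i : ℕ) : ZMod c) = 0 := by simpa [next] using h
  rw [ZMod.natCast_eq_zero_iff] at h0
  exact absurd (Nat.le_of_dvd (gap_spec hi).1 h0) (not_le.2 (gap_lt hM))

theorem sum_gap_le (M : Finset (ZMod c)) : ∑ i ∈ M, gap M i ≤ c :=
  sum_le_of_cyclic_gaps M _ fun _ _ _ ht hlt h => absurd (gap_le ht h) (not_le.2 hlt)

theorem eq_of_closed_next {B : Finset (ZMod c)} (hB : B ⊆ M) (hne : B.Nonempty)
    (hcl : ∀ i ∈ B, next M i ∈ B) : B = M := by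
  refine Finset.Subset.antisymm hB fun m hm => ?_
  obtain ⟨i, hi⟩ := hne
  have key : ∀ t : ℕ, ∀ i ∈ B, i + t ∈ M → i + t ∈ B := by
    intro t
    induction t using Nat.strong_induction_on with
    | _ t ih =>
    intro i hi h
    rcases Nat.eq_zero_or_pos t with rfl | ht
    · simpa using hi
    · have hg := gap_le ht h
      have e : next M i + ((t - gap M i : ℕ) : ZMod c) = i + t := by
        rw [next, Nat.cast_sub hg]; ring
      have := ih (t - gap M i) (by have := (gap_spec (hB hi)).1; omega) _ (hcl i hi)
      rw [e] at this
      exact this h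
  have e : m = i + ((m - i).val : ZMod c) := by simp
  rw [e] at hm ⊢
  exact key _ i hi hm

theorem exists_next_mem (h₁ : N₁.Nonempty) (h₂ : N₂.Nonempty) :
    ∃ i ∈ N₁, next (N₁ ∪ N₂) i ∈ N₂ := by
  by_contra! hcon
  have hN : N₁ = N₁ ∪ N₂ := eq_of_closed_next Finset.subset_union_left h₁ fun i hi =>
    (Finset.mem_union.1 (gap_spec (Finset.mem_union_left _ hi)).2).resolve_right (hcon i hi)
  obtain ⟨i, hi⟩ := h₁
  have hd : (N₁ ∪ N₂) \ N₂ = N₁ ∪ N₂ := by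
    refine eq_of_closed_next Finset.sdiff_subset ⟨next (N₁ ∪ N₂) i, ?_⟩ fun j hj => ?_
    · exact Finset.mem_sdiff.2 ⟨(gap_spec (Finset.mem_union_left _ hi)).2, hcon i hi⟩
    · have hj := (Finset.mem_sdiff.1 hj).1
      exact Finset.mem_sdiff.2 ⟨(gap_spec hj).2, hcon j (hN.symm ▸ hj)⟩
  obtain ⟨j, hj⟩ := h₂
  have : j ∈ (N₁ ∪ N₂) \ N₂ := hd.symm ▸ Finset.mem_union_right _ hj
  exact (Finset.mem_sdiff.1 this).2 hj

theorem two_le_card_transitions (h₁ : N₁.Nonempty) (h₂ : N₂.Nonempty)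
    (hM : 2 ≤ (N₁ ∪ N₂).card) : 2 ≤ (transitions N₁ N₂).card := by
  obtain ⟨i, hi, hi'⟩ := exists_next_mem h₁ h₂
  obtain ⟨j, hj, hj'⟩ := exists_next_mem h₂ h₁
  rw [Finset.union_comm] at hj'
  have hiM := Finset.mem_union_left N₂ hi
  have hiT : i ∈ transitions N₁ N₂ := Finset.mem_filter.2 ⟨hiM, .inl ⟨hi, hi'⟩⟩
  have hjT : j ∈ transitions N₁ N₂ :=
    Finset.mem_filter.2 ⟨Finset.mem_union_right _ hj, .inr ⟨hj, hj'⟩⟩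
  refine Finset.one_lt_card.2 ?_
  by_cases hij : i = j
  · subst hij
    have hn := (gap_spec hiM).2
    have hnn := (gap_spec hn).2
    refine ⟨_, hiT, next (N₁ ∪ N₂) i, Finset.mem_filter.2 ⟨hn, ?_⟩, (next_ne hiM hM).symm⟩
    rw [Finset.mem_union] at hnn
    tauto
  · exact ⟨i, hiT, j, hjT, hij⟩

theorem card_add_card_le_transitions (N₁ N₂ : Finset (ZMod c)) :
    N₁.card + N₂.card ≤ (transitions N₁ N₂).card + (N₁ ∪ N₂).card := by
  have : N₁ ∩ N₂ ⊆ transitions N₁ N₂ := fun i hi => by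
    rw [Finset.mem_inter] at hi
    have h := Finset.mem_union_left N₂ hi.1
    have hn := (gap_spec h).2
    refine Finset.mem_filter.2 ⟨h, ?_⟩
    rw [Finset.mem_union] at hn
    tauto
  have h1 := Finset.card_le_card this
  have h2 := Finset.card_union_add_card_inter N₁ N₂
  omega

end CyclicGaps

/-- `f` lists the vertices of a longest cycle of `G`, of length `c`, in cyclic order. -/
structure LongestCycleMap (G : SimpleGraph V) {c : ℕ} (f : ZMod c → V) : Prop where
  three_le : 3 ≤ c
  injective : Function.Injective f
  adj : ∀ i, G.Adj (f i) (f (i + 1))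
  longest : ∀ l : List V, l.Nodup → l.IsChain G.Adj → 3 ≤ l.length →
    (∀ x ∈ l.head?, ∀ y ∈ l.getLast?, G.Adj y x) → l.length ≤ c

namespace LongestCycleMap

variable {G : SimpleGraph V} {c : ℕ} {f : ZMod c → V}

theorem neZero (hf : LongestCycleMap G f) : NeZero c := ⟨by have := hf.three_le; omega⟩

theorem reverse (hf : LongestCycleMap G f) : LongestCycleMap G fun i => f (-i) := by
  refine ⟨hf.three_le, fun i j h => neg_injective (hf.injective h), fun i => ?_, hf.longest⟩
  have := (hf.adj (-(i + 1))).symm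
  rwa [show -(i + 1) + 1 = -i by ring] at this

/-- The vertices `f (i + a), …, f (i + b)`, in this order. -/
def arc (f : ZMod c → V) (i : ZMod c) (a b : ℕ) : List V :=
  (List.range' a (b + 1 - a)).map fun t : ℕ => f (i + t)

theorem mem_arc {i : ZMod c} {a b : ℕ} {v : V} :
    v ∈ arc f i a b ↔ ∃ t : ℕ, a ≤ t ∧ t ≤ b ∧ f (i + t) = v := by
  simp only [arc, List.mem_map, List.mem_range'_1]
  constructor
  · rintro ⟨t, ht, rfl⟩; exact ⟨t, by omega, by omega, rfl⟩
  · rintro ⟨t, h1, h2, rfl⟩; exact ⟨t, by omega, rfl⟩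

theorem length_arc (f : ZMod c → V) (i : ZMod c) (a b : ℕ) : (arc f i a b).length = b + 1 - a := by
  simp [arc]

theorem head?_arc {i : ZMod c} {a b : ℕ} (h : a ≤ b) : (arc f i a b).head? = some (f (i + a)) := by
  rw [arc, show b + 1 - a = (b - a) + 1 by omega, List.range'_succ]
  simp

theorem getLast?_arc {i : ZMod c} {a b : ℕ} (h : a ≤ b) :
    (arc f i a b).getLast? = some (f (i + b)) := by
  rw [arc, show b + 1 - a = (b - a) + 1 by omega, List.range'_1_concat]
  simp [show a + (b - a) = b by omega]

theorem add_natCast_inj (hf : LongestCycleMap G f) {i : ZMod c} {s t : ℕ}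
    (hst : s ≤ t) (h : t < s + c) (he : f (i + s) = f (i + t)) : s = t := by
  have := hf.neZero
  have he := add_left_cancel (hf.injective he)
  have h0 : ((t - s : ℕ) : ZMod c) = 0 := by rw [Nat.cast_sub hst, he, sub_self]
  rw [ZMod.natCast_eq_zero_iff] at h0
  rcases Nat.eq_zero_or_pos (t - s) with h1 | h1
  · omega
  · have := Nat.le_of_dvd h1 h0
    omega

theorem nodup_arc (hf : LongestCycleMap G f) {i : ZMod c} {a b : ℕ} (h : b < a + c) :
    (arc f i a b).Nodup := by
  refine List.Nodup.map_on ?_ List.nodup_range'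
  intro s hs t ht he
  rw [List.mem_range'_1] at hs ht
  rcases le_total s t with hst | hst
  · exact hf.add_natCast_inj hst (by omega) he
  · exact (hf.add_natCast_inj hst (by omega) he.symm).symm

theorem isChain_arc (hf : LongestCycleMap G f) (i : ZMod c) (a b : ℕ) :
    (arc f i a b).IsChain G.Adj := by
  refine List.isChain_map_of_isChain (R := fun s t => t = s + 1) _ ?_ (List.isChain_range' _ _ _)
  rintro s _ rfl
  have := hf.adj (i + s)
  push_cast
  rwa [← add_assoc]

/-- A path outside a longest cycle is shorter than either arc between its attachments. -/
theorem length_add_one_le (hf : LongestCycleMap G f) {i : ZMod c} {d : ℕ} (hd : 1 ≤ d)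
    (hdc : d < c) {W : Finset V} (hW : ∀ j, f j ∉ W) {l : List V} {x y : V}
    (hl : IsPathIn G W l x y) (hx : G.Adj (f i) x) (hy : G.Adj (f (i + d)) y) :
    l.length + 1 ≤ d := by
  have hlen := hl.length_pos
  have := hf.longest (l ++ arc f i d c) ?_ ?_ ?_ ?_
  · rw [List.length_append, length_arc] at this; omega
  · refine List.nodup_append.2 ⟨hl.nodup, hf.nodup_arc (by omega), fun u hu v hv huv => ?_⟩
    obtain ⟨t, -, -, rfl⟩ := mem_arc.1 hv
    exact hW _ (huv ▸ hl.mem u hu)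
  · refine List.isChain_append.2 ⟨hl.chain, hf.isChain_arc _ _ _, fun u hu v hv => ?_⟩
    rw [head?_arc hdc.le] at hv
    rw [hl.last] at hu
    cases hu; cases hv
    exact hy.symm
  · rw [List.length_append, length_arc]; omega
  · intro u hu v hv
    rw [List.head?_append, hl.head] at hu
    rw [List.getLast?_append, getLast?_arc hdc.le] at hv
    cases hu; cases hv
    simpa using hx

/-- Two disjoint crossing paths outside a longest cycle do not allow to reroute it. -/
theorem crossing_le (hf : LongestCycleMap G f) {i : ZMod c} {d r s : ℕ} (hr : 1 ≤ r) (hrd : r ≤ d)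
    (hs : 1 ≤ s) (hsd : d + s ≤ c) {W : Finset V} (hW : ∀ j, f j ∉ W) {l : List V} {x y : V}
    (hl : IsPathIn G W l x y) (hx : G.Adj (f i) x) (hy : G.Adj (f (i + d)) y)
    {q : List V} (hqn : q.Nodup) (hqf : ∀ j, f j ∉ q) (hql : ∀ v ∈ q, v ∉ l)
    (hq : ([f (i + r)] ++ q ++ [f (i + (d + s : ℕ))]).IsChain G.Adj) :
    l.length + q.length + 2 ≤ r + s := by
  have hlen := hl.length_pos
  have h3 := hf.three_le
  by_contra hcon
  rw [List.append_assoc, List.singleton_append, List.isChain_cons, List.isChain_append] at hq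
  obtain ⟨hq1, hqc, -, hq2⟩ := hq
  have := hf.longest (l ++ ((arc f i r d).reverse ++ (q ++ arc f i (d + s) c))) ?_ ?_ ?_ ?_
  · simp only [List.length_append, length_arc, List.length_reverse] at this; omega
  · refine List.nodup_append.2 ⟨hl.nodup, List.nodup_append.2 ⟨List.nodup_reverse.2
      (hf.nodup_arc (by omega)), List.nodup_append.2 ⟨hqn, hf.nodup_arc (by omega), ?_⟩, ?_⟩, ?_⟩
    · intro u hu v hv huv
      obtain ⟨t, -, -, rfl⟩ := mem_arc.1 hv
      exact hqf _ (huv ▸ hu)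
    · intro u hu v hv huv
      rw [List.mem_reverse] at hu
      obtain ⟨t, ht1, ht2, rfl⟩ := mem_arc.1 hu
      rcases List.mem_append.1 hv with hv | hv
      · exact hqf _ (huv ▸ hv)
      · obtain ⟨t', ht1', ht2', rfl⟩ := mem_arc.1 hv
        have := hf.add_natCast_inj (by omega) (by omega) huv
        omega
    · intro u hu v hv huv
      have huW := hl.mem u hu
      rcases List.mem_append.1 hv with hv | hv
      · rw [List.mem_reverse] at hv
        obtain ⟨t, -, -, rfl⟩ := mem_arc.1 hv
        exact hW _ (huv ▸ huW)
      rcases List.mem_append.1 hv with hv | hv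
      · exact hql v hv (huv ▸ hu)
      · obtain ⟨t, -, -, rfl⟩ := mem_arc.1 hv
        exact hW _ (huv ▸ huW)
  · refine List.isChain_append.2 ⟨hl.chain, List.isChain_append.2 ⟨?_, List.isChain_append.2
      ⟨hqc, hf.isChain_arc _ _ _, ?_⟩, ?_⟩, ?_⟩
    · rw [List.isChain_reverse]
      exact (hf.isChain_arc i r d).imp fun _ _ h => h.symm
    · intro u hu v hv
      rw [head?_arc hsd] at hv
      cases hv
      exact hq2 u hu _ (by simp)
    · intro u hu v hv
      rw [List.getLast?_reverse, head?_arc hrd] at hu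
      cases hu
      refine hq1 v ?_
      rw [List.head?_append, head?_arc hsd] at hv
      simpa [List.head?_append] using hv
    · intro u hu v hv
      rw [hl.last] at hu
      rw [List.head?_append, List.head?_reverse, getLast?_arc hrd] at hv
      cases hu; cases hv
      exact hy.symm
  · simp only [List.length_append, length_arc, List.length_reverse]; omega
  · intro u hu v hv
    rw [List.head?_append, hl.head] at hu
    rw [List.getLast?_append, List.getLast?_append, List.getLast?_append, getLast?_arc hsd] at hv
    cases hu; cases hv
    simpa using hx

end LongestCycleMap

/-- Fewer than `k` vertices never separate two vertices of `G`. -/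
def NoSmallCut (G : SimpleGraph V) (k : ℕ) : Prop :=
  ∀ S : Finset V, S.card < k → ∀ X : Finset V, (∃ u ∈ X, u ∉ S) → (∃ v, v ∉ X ∧ v ∉ S) →
    ∃ u ∈ X, ∃ v, u ∉ S ∧ v ∉ X ∧ v ∉ S ∧ G.Adj u v

/-- `H` is the vertex set of a component of `G` minus the cycle `f`. -/
structure OutsideComponent (G : SimpleGraph V) {c : ℕ} (f : ZMod c → V) (H : Finset V) : Prop where
  nonempty : H.Nonempty
  notMem : ∀ i, f i ∉ H
  connected : SetConnected G H
  closed : ∀ u ∈ H, ∀ v, G.Adj u v → v ∈ H ∨ ∃ i, f i = v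

theorem exists_outsideComponent [Fintype V] {G : SimpleGraph V} {c : ℕ} {f : ZMod c → V} {v₀ : V}
    (hv₀ : ∀ i, f i ≠ v₀) : ∃ H, OutsideComponent G f H := by
  classical
  let P : Finset V → Prop := fun H => H.Nonempty ∧ (∀ i, f i ∉ H) ∧
    ∀ u ∈ H, ∀ v, G.Adj u v → v ∈ H ∨ ∃ i, f i = v
  obtain ⟨H, hH, hmin⟩ := (Finset.univ.filter P).exists_min_image Finset.card
    ⟨Finset.univ.filter fun v => ∀ i, f i ≠ v, by
      simp only [Finset.mem_filter, Finset.mem_univ, true_and, P]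
      refine ⟨⟨v₀, by simpa using hv₀⟩, fun i h => h i rfl, fun u _ v _ => ?_⟩
      by_cases h : ∃ i, f i = v
      · exact .inr h
      · push Not at h; exact .inl h⟩
  simp only [Finset.mem_filter, Finset.mem_univ, true_and] at hH hmin
  refine ⟨H, hH.1, hH.2.1, fun A hA hne hAH => ?_, hH.2.2⟩
  by_contra! hcon
  have := hmin A ⟨hne, fun i hi => hH.2.1 i (hA hi), fun u hu v huv => ?_⟩
  · exact hAH (Finset.eq_of_subset_of_card_le hA this)
  · rcases hH.2.2 u (hA hu) v huv with h | h
    · by_contra! hv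
      exact hcon u hu v h hv.1 huv
    · exact .inr h

theorem LongestCycleMap.length_add_one_le_gap {G : SimpleGraph V} {c : ℕ} [NeZero c]
    {f : ZMod c → V} (hf : LongestCycleMap G f) {W : Finset V} (hW : ∀ j, f j ∉ W)
    {M : Finset (ZMod c)} (hM : 2 ≤ M.card) {i : ZMod c} (hi : i ∈ M) {x y : V} {l : List V}
    (hl : IsPathIn G W l x y) (hx : G.Adj (f i) x) (hy : G.Adj (f (next M i)) y) :
    l.length + 1 ≤ gap M i :=
  hf.length_add_one_le (gap_spec hi).1 (gap_lt hM) hW hl hx hy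

section Attachments

variable {G : SimpleGraph V} [DecidableRel G.Adj] {c : ℕ} [NeZero c] {f : ZMod c → V}

/-- The positions on the cycle `f` of the neighbours of `X`. -/
def attachments (G : SimpleGraph V) [DecidableRel G.Adj] (f : ZMod c → V) (X : Finset V) :
    Finset (ZMod c) :=
  Finset.univ.filter fun i => ∃ x ∈ X, G.Adj (f i) x

theorem mem_attachments {X : Finset V} {i : ZMod c} :
    i ∈ attachments G f X ↔ ∃ x ∈ X, G.Adj (f i) x := by
  simp [attachments]

theorem attachments_mono {X Y : Finset V} (h : X ⊆ Y) :
    attachments G f X ⊆ attachments G f Y := fun i hi => by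
  obtain ⟨x, hx, hix⟩ := mem_attachments.1 hi
  exact mem_attachments.2 ⟨x, h hx, hix⟩

namespace OutsideComponent

variable {H : Finset V}

theorem degree_le (hH : OutsideComponent G f H) [Fintype V] [DecidableEq V] {x : V} (hx : x ∈ H) :
    degIn G Finset.univ x ≤ degIn G H x + (attachments G f {x}).card := by
  have : (Finset.univ.filter fun v => G.Adj x v) ⊆
      (H.filter fun v => G.Adj x v) ∪ (attachments G f {x}).image f := fun v hv => by
    have hv := (Finset.mem_filter.1 hv).2
    rcases hH.closed x hx v hv with h | ⟨i, rfl⟩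
    · simp [h, hv]
    · refine Finset.mem_union_right _ (Finset.mem_image_of_mem _ (mem_attachments.2 ?_))
      exact ⟨x, by simp, hv.symm⟩
  exact (Finset.card_le_card this).trans ((Finset.card_union_le _ _).trans
    (Nat.add_le_add_left Finset.card_image_le _))

theorem add_one_notMem (hH : OutsideComponent G f H) (hf : LongestCycleMap G f) {i : ZMod c}
    (hi : i ∈ attachments G f H) :
    i + 1 ∉ attachments G f H := by
  intro h
  obtain ⟨x, hx, hix⟩ := mem_attachments.1 hi
  obtain ⟨y, hy, hiy⟩ := mem_attachments.1 h
  obtain ⟨l, hl⟩ := hH.connected.exists_path hx hy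
  have h1 := hl.length_pos
  have := hf.length_add_one_le (i := i) (d := 1) le_rfl (by have := hf.three_le; omega)
    hH.notMem hl hix (by simpa using hiy)
  omega

theorem two_le_gap (hH : OutsideComponent G f H) (hf : LongestCycleMap G f) {M : Finset (ZMod c)}
    (hM : M ⊆ attachments G f H) {i : ZMod c} (hi : i ∈ M) : 2 ≤ gap M i := by
  have h := gap_spec hi
  by_contra hlt
  have h1 : gap M i = 1 := by omega
  have hn := h.2
  rw [next, h1, Nat.cast_one] at hn
  exact hH.add_one_notMem hf (hM hi) (hM hn)

theorem le_gap_of_mem_transitions (hH : OutsideComponent G f H) (hf : LongestCycleMap G f)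
    {X₁ X₂ : Finset V} {L : ℕ}
    (hp : ∀ x ∈ X₁, ∀ y ∈ X₂, ∃ l, IsPathIn G H l x y ∧ L ≤ l.length)
    (hM : 2 ≤ (attachments G f X₁ ∪ attachments G f X₂).card) {i : ZMod c}
    (hi : i ∈ transitions (attachments G f X₁) (attachments G f X₂)) :
    L + 1 ≤ gap (attachments G f X₁ ∪ attachments G f X₂) i := by
  obtain ⟨hi, ⟨h₁, h₂⟩ | ⟨h₁, h₂⟩⟩ := Finset.mem_filter.1 hi
  all_goals
    obtain ⟨x, hx, hix⟩ := mem_attachments.1 h₁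
    obtain ⟨y, hy, hiy⟩ := mem_attachments.1 h₂
  · obtain ⟨l, hl, hlen⟩ := hp x hx y hy
    exact (Nat.add_le_add_right hlen 1).trans (hf.length_add_one_le_gap hH.notMem hM hi hl hix hiy)
  · obtain ⟨l, hl, hlen⟩ := hp y hy x hx
    rw [← List.length_reverse] at hlen
    exact (Nat.add_le_add_right hlen 1).trans
      (hf.length_add_one_le_gap hH.notMem hM hi hl.reverse hix hiy)

theorem sum_add_two_mul_card_le (hH : OutsideComponent G f H) (hf : LongestCycleMap G f)
    {M : Finset (ZMod c)}
    (hM : M ⊆ attachments G f H) (w : ZMod c → ℕ)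
    (hw : ∀ i ∈ M, w i = 0 ∨ w i + 2 ≤ gap M i) : ∑ i ∈ M, w i + 2 * M.card ≤ c := by
  refine le_trans ?_ (sum_gap_le M)
  rw [mul_comm, ← smul_eq_mul, ← Finset.sum_const, ← Finset.sum_add_distrib]
  refine Finset.sum_le_sum fun i hi => ?_
  rcases hw i hi with h | h
  · rw [h, zero_add]
    exact hH.two_le_gap hf hM hi
  · exact h

theorem four_le_card_attachments (hH : OutsideComponent G f H) [DecidableEq V]
    (hf : LongestCycleMap G f)
    (h4 : NoSmallCut G 4) : 4 ≤ (attachments G f H).card := by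
  by_contra hlt
  have hS : ∀ v ∈ H, v ∉ (attachments G f H).image f := fun v hv h => by
    obtain ⟨i, -, rfl⟩ := Finset.mem_image.1 h
    exact hH.notMem i hv
  obtain ⟨u, hu, v, huS, hv, hvS, huv⟩ := h4 ((attachments G f H).image f)
    (Finset.card_image_le.trans_lt (by omega)) H
    (hH.nonempty.imp fun v hv => ⟨hv, hS v hv⟩) (by
      have hmem : ∀ j, f j ∈ (attachments G f H).image f → j ∈ attachments G f H := fun j hj => by
        obtain ⟨k, hk, hkj⟩ := Finset.mem_image.1 hj
        exact hf.injective hkj ▸ hk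
      by_cases h0 : 0 ∈ attachments G f H
      · exact ⟨f (0 + 1), hH.notMem _, fun h => hH.add_one_notMem hf h0 (hmem _ h)⟩
      · exact ⟨f 0, hH.notMem _, fun h => h0 (hmem _ h)⟩)
  rcases hH.closed u hu v huv with h | ⟨i, rfl⟩
  · exact hv h
  · exact hvS (Finset.mem_image_of_mem _ (mem_attachments.2 ⟨u, hu, huv.symm⟩))

/-- A part of `H` attached to the rest of `H` by one vertex has three neighbours on the cycle. -/
theorem three_le_card_attachments_part (hH : OutsideComponent G f H) [DecidableEq V]
    (h4 : NoSmallCut G 4) {X : Finset V}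
    {b y : V} (hXH : X ⊆ H) (hne : X.Nonempty) (hb : b ∉ X)
    (hcl : ∀ u ∈ X, ∀ v ∈ H, G.Adj u v → v ∈ X ∨ v = b) (hy : y ∈ H) (hyX : y ∉ X) (hyb : y ≠ b) :
    3 ≤ (attachments G f X).card := by
  by_contra hlt
  have hS : ∀ v ∈ H, v ≠ b → v ∉ insert b ((attachments G f X).image f) := fun v hv hvb h => by
    rcases Finset.mem_insert.1 h with h | h
    · exact hvb h
    obtain ⟨i, -, rfl⟩ := Finset.mem_image.1 h
    exact hH.notMem i hv
  obtain ⟨u, hu, v, huS, hv, hvS, huv⟩ := h4 (insert b ((attachments G f X).image f))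
    ((Finset.card_insert_le _ _).trans_lt (Nat.add_lt_of_lt_sub
      (Finset.card_image_le.trans_lt (by omega)))) X
    (hne.imp fun v hv => ⟨hv, hS v (hXH hv) fun h => hb (h ▸ hv)⟩) ⟨y, hyX, hS y hy hyb⟩
  rw [Finset.mem_insert, not_or] at hvS
  rcases hH.closed u (hXH hu) v huv with h | ⟨i, rfl⟩
  · exact (hcl u hu v h huv).elim hv hvS.1
  · exact hvS.2 (Finset.mem_image_of_mem _ (mem_attachments.2 ⟨u, hu, huv.symm⟩))

/-- The circumference bound when some component outside the cycle has a cut vertex. -/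
theorem four_mul_le_of_cut (hH : OutsideComponent G f H) [Fintype V] [DecidableEq V]
    (hf : LongestCycleMap G f)
    (h4 : NoSmallCut G 4) {δ : ℕ} (hδ : ∀ v, δ ≤ degIn G Finset.univ v) {b : V} (hb : b ∈ H)
    (hcut : ¬ SetConnected G (H.erase b)) : 4 * δ ≤ c + 8 := by
  unfold SetConnected at hcut
  push Not at hcut
  obtain ⟨A, hA, hAne, hAH, hAcl⟩ := hcut
  have hB : H.erase b \ A ⊆ H.erase b := Finset.sdiff_subset
  have hBne : (H.erase b \ A).Nonempty := by
    rw [Finset.sdiff_nonempty]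
    exact fun h => hAH (Finset.Subset.antisymm hA h)
  have hBcl : ∀ u ∈ H.erase b \ A, ∀ v ∈ H.erase b, v ∉ H.erase b \ A → ¬ G.Adj u v := by
    intro u hu v hv hvB huv
    rw [Finset.mem_sdiff] at hu hvB
    exact hAcl v (by tauto) u hu.1 hu.2 huv.symm
  have part : ∀ A ⊆ H.erase b, A.Nonempty →
      (∀ u ∈ A, ∀ v ∈ H.erase b, v ∉ A → ¬ G.Adj u v) →
      insert b A ⊆ H ∧ ∃ X b' x₀, LongPathPart G (insert b A) b X b' x₀ := by
    intro A hA hne hcl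
    have hsub := Finset.insert_subset hb (hA.trans (Finset.erase_subset _ _))
    refine ⟨hsub, exists_longPathPart (hH.connected.insert_of_closed hb hA hcl)
      (Finset.mem_insert_self _ _) ?_⟩
    rw [Finset.card_insert_of_notMem fun h => by simpa using hA h]
    have := hne.card_pos
    omega
  obtain ⟨hAs, X₁, b₁, x₁, hX₁⟩ := part A hA hAne hAcl
  obtain ⟨hBs, X₂, b₂, x₂, hX₂⟩ := part _ hB hBne hBcl
  obtain ⟨-, hcl₁, hd₁⟩ := hX₁.of_insert hAs hAcl
  obtain ⟨-, hcl₂, hd₂⟩ := hX₂.of_insert hBs hBcl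
  have hXH₁ := hX₁.subset.trans hAs
  have hXH₂ := hX₂.subset.trans hBs
  have hdisj : ∀ v ∈ insert b A, v ∈ insert b (H.erase b \ A) → v = b := fun v h1 h2 => by
    rw [Finset.mem_insert] at h1 h2
    rw [Finset.mem_sdiff] at h2
    tauto
  have hne₁ : ∀ v ∈ X₁, v ∉ insert b (H.erase b \ A) := fun v hv h =>
    hX₁.z_notMem (hdisj v (hX₁.subset hv) h ▸ hv)
  have hne₂ : ∀ v ∈ X₂, v ∉ insert b A := fun v hv h =>
    hX₂.z_notMem (hdisj v h (hX₂.subset hv) ▸ hv)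
  have hN₁ := hH.three_le_card_attachments_part h4 hXH₁ ⟨_, hX₁.x₀_mem⟩ hX₁.b_notMem hcl₁
    (hXH₂ hX₂.x₀_mem) (fun h => hne₁ _ h (hX₂.subset hX₂.x₀_mem))
    (fun h => hne₂ _ hX₂.x₀_mem (h ▸ hX₁.b_mem))
  have hN₂ := hH.three_le_card_attachments_part h4 hXH₂ ⟨_, hX₂.x₀_mem⟩ hX₂.b_notMem hcl₂
    (hXH₁ hX₁.x₀_mem) (fun h => hne₁ _ hX₁.x₀_mem (hX₂.subset h))
    (fun h => hne₁ _ hX₁.x₀_mem (h ▸ hX₂.b_mem))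
  have hp₁ : 1 ≤ degIn G H x₁ := degIn_pos hH.connected (hXH₁ hX₁.x₀_mem) hb
    (fun h => hX₁.z_notMem (h ▸ hX₁.x₀_mem))
  have hp₂ : 1 ≤ degIn G H x₂ := degIn_pos hH.connected (hXH₂ hX₂.x₀_mem) hb
    (fun h => hX₂.z_notMem (h ▸ hX₂.x₀_mem))
  have hδ₁ := (hδ x₁).trans (hH.degree_le (hXH₁ hX₁.x₀_mem))
  have hδ₂ := (hδ x₂).trans (hH.degree_le (hXH₂ hX₂.x₀_mem))
  have hq₁ := Finset.card_le_card (attachments_mono (G := G) (f := f)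
    (Finset.singleton_subset_iff.2 hX₁.x₀_mem))
  have hq₂ := Finset.card_le_card (attachments_mono (G := G) (f := f)
    (Finset.singleton_subset_iff.2 hX₂.x₀_mem))
  have hM : attachments G f X₁ ∪ attachments G f X₂ ⊆ attachments G f H :=
    Finset.union_subset (attachments_mono hXH₁) (attachments_mono hXH₂)
  have hM₂ : 2 ≤ (attachments G f X₁ ∪ attachments G f X₂).card :=
    le_trans (by omega) (Finset.card_le_card Finset.subset_union_left)
  have hT := two_le_card_transitions (Finset.card_pos.1 (by omega)) (Finset.card_pos.1 (by omega))
    hM₂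
  have hTM := card_add_card_le_transitions (attachments G f X₁) (attachments G f X₂)
  have hsum := hH.sum_add_two_mul_card_le hf hM (fun i => if i ∈ transitions (attachments G f X₁)
    (attachments G f X₂) then degIn G H x₁ + degIn G H x₂ else 0) fun i _ => by
      by_cases hi : i ∈ transitions (attachments G f X₁) (attachments G f X₂)
      · rw [if_pos hi]
        refine .inr (hH.le_gap_of_mem_transitions hf (L := degIn G H x₁ + degIn G H x₂ + 1)
          (fun x hx y hy => ?_) hM₂ hi)
        obtain ⟨l₁, hl₁, hlen₁⟩ := hX₁.path x hx
        obtain ⟨l₂, hl₂, hlen₂⟩ := hX₂.path y hy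
        obtain ⟨l, hl, hlen⟩ := hl₁.exists_join hl₂.reverse hdisj
        rw [List.length_reverse] at hlen
        exact ⟨l, hl.mono (Finset.union_subset hAs hBs), by omega⟩
      · exact .inl (if_neg hi)
  rw [Finset.sum_ite_mem, Finset.inter_eq_right.2 (transitions_subset _ _), Finset.sum_const,
    smul_eq_mul] at hsum
  obtain ⟨t, ht⟩ := Nat.exists_eq_add_of_le hT
  obtain ⟨p, hp⟩ := Nat.exists_eq_add_of_le (Nat.add_le_add hp₁ hp₂)
  rw [hp, ht] at hsum
  nlinarith [Nat.zero_le (t * p)]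

end OutsideComponent
end Attachments

section NoCutVertex

variable {G : SimpleGraph V} [DecidableRel G.Adj] {c : ℕ} [NeZero c] {f : ZMod c → V}

theorem two_le_degIn [DecidableEq V] {W : Finset V} (hW : ∀ b ∈ W, SetConnected G (W.erase b))
    (hcard : 3 ≤ W.card) {x : V} (hx : x ∈ W) : 2 ≤ degIn G W x := by
  have key : ∀ b ∈ W, b ≠ x → ∃ v ∈ W, v ≠ b ∧ G.Adj x v := fun b hb hbx => by
    have hxb := Finset.mem_erase.2 ⟨hbx.symm, hx⟩
    obtain ⟨z, hz, hzx⟩ := Finset.exists_mem_ne (s := W.erase b)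
      (by rw [Finset.card_erase_of_mem hb]; omega) x
    obtain ⟨v, hv⟩ := Finset.card_pos.1 (degIn_pos (hW b hb) hxb hz hzx.symm)
    rw [Finset.mem_filter, Finset.mem_erase] at hv
    exact ⟨v, hv.1.2, hv.1.1, hv.2⟩
  obtain ⟨z, hz, hzx⟩ := Finset.exists_mem_ne (s := W) (by omega) x
  obtain ⟨u, hu, -, hxu⟩ := key z hz hzx
  obtain ⟨v, hv, hvu, hxv⟩ := key u hu hxu.ne'
  exact Finset.one_lt_card.2 ⟨u, by simp [hu, hxu], v, by simp [hv, hxv], hvu.symm⟩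

/-- The positions whose vertex and the vertex of the next attachment have distinct neighbours
in `H`. -/
noncomputable def spreads (G : SimpleGraph V) [DecidableRel G.Adj] (f : ZMod c → V)
    (H : Finset V) : Finset (ZMod c) :=
  open Classical in (attachments G f H).filter fun i =>
    ∃ x ∈ H, ∃ y ∈ H, x ≠ y ∧ G.Adj (f i) x ∧ G.Adj (f (next (attachments G f H) i)) y

theorem mem_spreads {H : Finset V} {i : ZMod c} : i ∈ spreads G f H ↔ i ∈ attachments G f H ∧
    ∃ x ∈ H, ∃ y ∈ H, x ≠ y ∧ G.Adj (f i) x ∧ G.Adj (f (next (attachments G f H) i)) y := by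
  simp [spreads]

namespace OutsideComponent

variable {H : Finset V}

theorem spreads_nonempty [DecidableEq V] (hH : OutsideComponent G f H)
    (hf : LongestCycleMap G f) (h4 : NoSmallCut G 4) (hcard : 2 ≤ H.card) :
    (spreads G f H).Nonempty := by
  set M := attachments G f H
  obtain ⟨i₀, hi₀⟩ : M.Nonempty :=
    Finset.card_pos.1 (Nat.zero_lt_of_lt (hH.four_le_card_attachments hf h4))
  obtain ⟨x₀, hx₀, hix₀⟩ := mem_attachments.1 hi₀
  obtain ⟨z, hz, hzx⟩ := Finset.exists_mem_ne hcard x₀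
  obtain ⟨x₁, hx₁, v, -, hv, hvx, hxv⟩ := h4 {x₀} (by simp) (H.erase x₀)
    ⟨z, by simp [hz, hzx], by simpa using hzx⟩ ⟨f 0, fun h => hH.notMem 0 (Finset.mem_of_mem_erase h),
      fun h => hH.notMem 0 (by simpa using Finset.mem_singleton.1 h ▸ hx₀)⟩
  rw [Finset.mem_erase] at hx₁ hv
  rw [Finset.mem_singleton] at hvx
  obtain h | ⟨i₁, rfl⟩ := hH.closed x₁ hx₁.2 v hxv
  · exact absurd ⟨hvx, h⟩ hv
  have hi₁ : i₁ ∈ M := mem_attachments.2 ⟨x₁, hx₁.2, hxv.symm⟩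
  by_contra hempty
  have hun : ∀ i ∈ M, ∀ x ∈ H, ∀ y ∈ H, G.Adj (f i) x → G.Adj (f (next M i)) y → x = y := by
    intro i hi x hx y hy hix hiy
    by_contra hxy
    exact hempty ⟨i, mem_spreads.2 ⟨hi, x, hx, y, hy, hxy, hix, hiy⟩⟩
  have hB : M.filter (fun i => G.Adj (f i) x₀) = M := by
    refine eq_of_closed_next (Finset.filter_subset _ _)
      ⟨i₀, Finset.mem_filter.2 ⟨hi₀, hix₀⟩⟩ fun i hi => ?_
    rw [Finset.mem_filter] at hi ⊢
    obtain ⟨y, hy, hiy⟩ := mem_attachments.1 (gap_spec hi.1).2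
    exact ⟨(gap_spec hi.1).2, hun i hi.1 x₀ hx₀ y hy hi.2 hiy ▸ hiy⟩
  obtain ⟨y, hy, hiy⟩ := mem_attachments.1 (gap_spec hi₁).2
  have hi₁x₀ := (Finset.mem_filter.1 (hB.symm ▸ hi₁)).2
  exact hx₁.1 ((hun i₁ hi₁ x₁ hx₁.2 y hy hxv.symm hiy).trans
    (hun i₁ hi₁ x₀ hx₀ y hy hi₁x₀ hiy).symm)

theorem four_le_card_spreads [DecidableEq V] (hH : OutsideComponent G f H)
    (hf : LongestCycleMap G f) (h4 : NoSmallCut G 4) (hcard : 4 ≤ H.card) :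
    4 ≤ (spreads G f H).card := by
  have hne := hH.spreads_nonempty hf h4 (by omega)
  by_contra hlt
  have hcover : ∀ i, ∃ v, (v = f i ∨ v ∈ H ∧ G.Adj (f i) v) ∧
      ((∃ x, H.filter (fun y => G.Adj (f i) y) = {x}) → H.filter (fun y => G.Adj (f i) y) = {v}) ∧
      ((¬ ∃ x, H.filter (fun y => G.Adj (f i) y) = {x}) → v = f i) := by
    intro i
    by_cases h : ∃ x, H.filter (fun y => G.Adj (f i) y) = {x}
    · obtain ⟨x, hx⟩ := h
      have := Finset.mem_filter.1 (hx ▸ Finset.mem_singleton_self x)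
      exact ⟨x, .inr this, fun _ => hx, fun h => (h ⟨x, hx⟩).elim⟩
    · exact ⟨f i, .inl rfl, fun h' => (h h').elim, fun _ => rfl⟩
  choose s hs hs₁ hs₂ using hcover
  set M := attachments G f H with hM
  have hstep : ∀ i ∈ M, i ∉ spreads G f H → s (next M i) = s i := by
    intro i hi hisp
    have hun : ∀ x ∈ H, ∀ y ∈ H, G.Adj (f i) x → G.Adj (f (next M i)) y → x = y := by
      intro x hx y hy hix hiy
      by_contra hxy
      exact hisp (mem_spreads.2 ⟨hi, x, hx, y, hy, hxy, hix, hiy⟩)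
    obtain ⟨x, hx, hix⟩ := mem_attachments.1 hi
    obtain ⟨y, hy, hiy⟩ := mem_attachments.1 (gap_spec hi).2
    obtain rfl := hun x hx y hy hix hiy
    have e₁ : H.filter (fun z => G.Adj (f i) z) = {x} := by
      ext z
      rw [Finset.mem_filter, Finset.mem_singleton]
      exact ⟨fun h => hun z h.1 x hx h.2 hiy, fun h => h ▸ ⟨hx, hix⟩⟩
    have e₂ : H.filter (fun z => G.Adj (f (next M i)) z) = {x} := by
      ext z
      rw [Finset.mem_filter, Finset.mem_singleton]
      exact ⟨fun h => (hun x hx z h.1 hix h.2).symm, fun h => h ▸ ⟨hx, hiy⟩⟩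
    have h₁ := hs₁ i ⟨x, e₁⟩
    have h₂ := hs₁ (next M i) ⟨x, e₂⟩
    rw [e₁, Finset.singleton_inj] at h₁
    rw [e₂, Finset.singleton_inj] at h₂
    rw [← h₁, ← h₂]
  have hall : ∀ i ∈ M, s i ∈ (spreads G f H).image s := by
    by_contra! hcon
    obtain ⟨i, hi, hiS⟩ := hcon
    have := eq_of_closed_next (M := M) (B := M.filter fun i => s i ∉ (spreads G f H).image s)
      (Finset.filter_subset _ _) ⟨i, by simp only [Finset.mem_filter]; exact ⟨hi, hiS⟩⟩
      fun j hj => by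
        rw [Finset.mem_filter] at hj ⊢
        refine ⟨(gap_spec hj.1).2, ?_⟩
        rw [hstep j hj.1 fun h => hj.2 (Finset.mem_image_of_mem _ h)]
        exact hj.2
    obtain ⟨j, hj⟩ := hne
    have hj' := (mem_spreads.1 hj).1
    rw [← hM, ← this] at hj'
    exact (Finset.mem_filter.1 hj').2 (Finset.mem_image_of_mem _ hj)
  have hScard : ((spreads G f H).image s).card < 4 := Finset.card_image_le.trans_lt (by omega)
  obtain ⟨u, hu, v, huS, hv, hvS, huv⟩ := h4 _ hScard H
    (by
      by_contra! h
      have := Finset.card_le_card h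
      omega)
    (by
      obtain ⟨i, hi⟩ := hne
      have hi := (mem_spreads.1 hi).1
      refine ⟨f (i + 1), hH.notMem _, fun h => ?_⟩
      obtain ⟨j, hj, hji⟩ := Finset.mem_image.1 h
      rcases hs j with h | h
      · have := hf.injective (h.symm.trans hji)
        exact hH.add_one_notMem hf hi (this ▸ (mem_spreads.1 hj).1)
      · exact hH.notMem _ (hji ▸ h.1))
  obtain h | ⟨i, rfl⟩ := hH.closed u hu v huv
  · exact hv h
  have hiM := hall i (mem_attachments.2 ⟨u, hu, huv.symm⟩)
  by_cases h : ∃ x, H.filter (fun y => G.Adj (f i) y) = {x}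
  · have hmem : u ∈ H.filter fun y => G.Adj (f i) y := Finset.mem_filter.2 ⟨hu, huv.symm⟩
    rw [hs₁ i h, Finset.mem_singleton] at hmem
    exact huS (hmem ▸ hiM)
  · exact hvS (hs₂ i h ▸ hiM)

/-- The circumference bound when some component outside the cycle has at least three vertices but
no cut vertex. -/
theorem four_mul_le_of_no_cut [Fintype V] [DecidableEq V] (hH : OutsideComponent G f H)
    (hf : LongestCycleMap G f) (h4 : NoSmallCut G 4) {δ : ℕ}
    (hδ : ∀ v, δ ≤ degIn G Finset.univ v) (hcard : 3 ≤ H.card)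
    (hns : ∀ b ∈ H, SetConnected G (H.erase b)) : 4 * δ ≤ c + 8 := by
  obtain ⟨y, hy, hymin⟩ := H.exists_min_image (degIn G H) hH.nonempty
  obtain ⟨y', hy', hymin'⟩ := (H.erase y).exists_min_image (degIn G H)
    (by rw [← Finset.card_pos, Finset.card_erase_of_mem hy]; omega)
  have hy'H := (Finset.mem_erase.1 hy').2
  have hp := two_le_degIn hns hcard hy
  have hpp' := hymin y' hy'H
  have hδ₁ := (hδ y).trans (hH.degree_le hy)
  have hδ₂ := (hδ y').trans (hH.degree_le hy'H)
  have hq := Finset.card_le_card (attachments_mono (G := G) (f := f)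
    (Finset.singleton_subset_iff.2 hy'))
  have hM : attachments G f {y} ∪ attachments G f (H.erase y) = attachments G f H := by
    ext i
    simp only [Finset.mem_union, mem_attachments, Finset.mem_singleton, Finset.mem_erase]
    constructor
    · rintro (⟨x, rfl, h⟩ | ⟨x, hx, h⟩)
      exacts [⟨x, hy, h⟩, ⟨x, hx.2, h⟩]
    · rintro ⟨x, hx, h⟩
      by_cases hxy : x = y
      exacts [.inl ⟨x, hxy, h⟩, .inr ⟨x, ⟨hxy, hx⟩, h⟩]
  have hk := hH.four_le_card_attachments hf h4
  have hTM := card_add_card_le_transitions (attachments G f {y}) (attachments G f (H.erase y))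
  set T := transitions (attachments G f {y}) (attachments G f (H.erase y))
  have hTsub : T ⊆ attachments G f H := hM ▸ transitions_subset _ _
  have hgapT : ∀ i ∈ T, degIn G H y' + 1 + 1 ≤ gap (attachments G f H) i := fun i hi => by
    rw [← hM]
    refine hH.le_gap_of_mem_transitions hf (fun x hx z hz => ?_) (by rw [hM]; omega) hi
    obtain rfl := Finset.mem_singleton.1 hx
    obtain ⟨hzx, hz⟩ := Finset.mem_erase.1 hz
    obtain ⟨x₀, hx₀, hne, -, l, hl, hlen⟩ := exists_long_path hns hcard hy hz hzx.symm
    have := hymin' x₀ (Finset.mem_erase.2 ⟨hne, hx₀⟩)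
    exact ⟨l, hl, by omega⟩
  have hgapS : ∀ i ∈ spreads G f H, degIn G H y + 1 + 1 ≤ gap (attachments G f H) i :=
    fun i hi => by
      obtain ⟨hi, x, hx, z, hz, hxz, hix, hiz⟩ := mem_spreads.1 hi
      obtain ⟨x₀, hx₀, -, -, l, hl, hlen⟩ := exists_long_path hns hcard hx hz hxz
      have := hymin x₀ hx₀
      have := hf.length_add_one_le_gap hH.notMem (by omega) hi hl hix hiz
      omega
  have hsum := hH.sum_add_two_mul_card_le hf subset_rfl
    (fun i => (if i ∈ T then degIn G H y' else 0) +
      if i ∈ spreads G f H \ T then degIn G H y else 0) fun i _ => by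
      by_cases hiT : i ∈ T
      · have := hgapT i hiT
        simp only [hiT, Finset.mem_sdiff, if_true, not_true, and_false, if_false]
        omega
      · by_cases hiS : i ∈ spreads G f H
        · have := hgapS i hiS
          simp only [hiT, hiS, Finset.mem_sdiff, not_false_eq_true, and_true, if_true, if_false]
          omega
        · simp [hiT, hiS]
  have hSsub : spreads G f H \ T ⊆ attachments G f H :=
    fun i hi => (mem_spreads.1 (Finset.mem_sdiff.1 hi).1).1
  rw [Finset.sum_add_distrib, Finset.sum_ite_mem, Finset.sum_ite_mem,
    Finset.inter_eq_right.2 hTsub, Finset.inter_eq_right.2 hSsub, Finset.sum_const,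
    Finset.sum_const, smul_eq_mul, smul_eq_mul] at hsum
  rw [hM] at hTM
  have hST := Finset.le_card_sdiff T (spreads G f H)
  obtain ⟨p, hp⟩ := Nat.exists_eq_add_of_le hp
  obtain ⟨r, hr⟩ := Nat.exists_eq_add_of_le hpp'
  rw [hr] at hsum hδ₂
  rw [hp] at hsum hδ₁ hδ₂
  rcases Nat.lt_or_ge H.card 4 with hlt | hge
  · have : degIn G H y' ≤ (H.erase y').card := Finset.card_le_card fun v hv => by
      obtain ⟨hv, hadj⟩ := Finset.mem_filter.1 hv
      exact Finset.mem_erase.2 ⟨hadj.ne', hv⟩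
    rw [Finset.card_erase_of_mem hy'H] at this
    obtain ⟨rfl, rfl⟩ : p = 0 ∧ r = 0 := by omega
    omega
  have hS := hH.four_le_card_spreads hf h4 hge
  rcases Nat.eq_zero_or_pos (attachments G f {y}).card with h0 | h0
  · have h1 : 4 * (2 + p) ≤ (T.card + (spreads G f H \ T).card) * (2 + p) :=
      Nat.mul_le_mul_right _ (by omega)
    nlinarith [Nat.zero_le (T.card * r)]
  have ht₂ : 2 ≤ T.card := by
    refine two_le_card_transitions (Finset.card_pos.1 h0) ?_ (by rw [hM]; omega)
    obtain ⟨i, hi⟩ := Finset.card_pos.1 (by omega : 0 < (spreads G f H).card)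
    obtain ⟨-, x, hx, z, hz, hxz, hix, hiz⟩ := mem_spreads.1 hi
    by_cases hxy : x = y
    · exact ⟨_, mem_attachments.2 ⟨z, Finset.mem_erase.2 ⟨fun h => hxz (hxy.trans h.symm), hz⟩, hiz⟩⟩
    · exact ⟨_, mem_attachments.2 ⟨x, Finset.mem_erase.2 ⟨hxy, hx⟩, hix⟩⟩
  rcases le_total 4 T.card with ht | ht
  · obtain ⟨t, ht⟩ := Nat.exists_eq_add_of_le ht
    rw [ht] at hsum hTM
    nlinarith [Nat.zero_le (t * (p + r)), Nat.zero_le ((spreads G f H \ T).card * (2 + p))]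
  · have h1 : (4 - T.card) * (2 + p) ≤ (spreads G f H \ T).card * (2 + p) :=
      Nat.mul_le_mul_right _ (by omega)
    generalize T.card = t at *
    interval_cases t <;> omega

end OutsideComponent
end NoCutVertex

section IndependentHeads

variable {G : SimpleGraph V} {c : ℕ} {f : ZMod c → V}

theorem LongestCycleMap.not_adj_heads (hf : LongestCycleMap G f) {W : Finset V}
    (hW : ∀ j, f j ∉ W) {i j : ZMod c} (hij : i ≠ j) {x y : V} {l : List V}
    (hl : IsPathIn G W l x y) (hx : G.Adj (f i) x) (hy : G.Adj (f j) y) :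
    ¬ G.Adj (f (i + 1)) (f (j + 1)) := by
  have := hf.neZero
  intro h
  obtain ⟨d, hd, hdc, rfl⟩ := ZMod.exists_eq_add_natCast_of_ne hij
  have := hf.crossing_le (q := []) le_rfl hd le_rfl hdc hW hl hx hy (by simp) (by simp) (by simp)
    (by simpa [add_assoc] using h)
  have := hl.length_pos
  omega

theorem indep_insert [DecidableEq V] {s : Finset V} {v : V} (hs : ∀ u ∈ s, ∀ w ∈ s, ¬ G.Adj u w)
    (hv : ∀ u ∈ s, ¬ G.Adj v u) : ∀ u ∈ insert v s, ∀ w ∈ insert v s, ¬ G.Adj u w := by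
  intro u hu w hw huw
  rw [Finset.mem_insert] at hu hw
  rcases hu with rfl | hu <;> rcases hw with rfl | hw
  · exact huw.ne rfl
  · exact hv w hw huw
  · exact hv u hu huw.symm
  · exact hs u hu w hw huw

theorem OutsideComponent.card_attachments_lt [DecidableEq V] [DecidableRel G.Adj] [NeZero c]
    {H : Finset V} (hH : OutsideComponent G f H) (hf : LongestCycleMap G f) {a : ℕ}
    (hα : ∀ s : Finset V, (∀ u ∈ s, ∀ v ∈ s, ¬ G.Adj u v) → s.card ≤ a) :
    (attachments G f H).card + 1 ≤ a := by
  obtain ⟨x, hx⟩ := hH.nonempty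
  have := hα (insert x ((attachments G f H).image fun i => f (i + 1))) (indep_insert ?_ ?_)
  · rwa [Finset.card_insert_of_notMem, Finset.card_image_of_injective] at this
    · exact fun i j h => add_right_cancel (hf.injective h)
    · intro h
      obtain ⟨i, -, hi⟩ := Finset.mem_image.1 h
      exact hH.notMem _ (hi ▸ hx)
  · intro u hu w hw
    obtain ⟨i, hi, rfl⟩ := Finset.mem_image.1 hu
    obtain ⟨j, hj, rfl⟩ := Finset.mem_image.1 hw
    by_cases hij : i = j
    · rw [hij]
      exact G.irrefl
    obtain ⟨y, hy, hiy⟩ := mem_attachments.1 hi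
    obtain ⟨z, hz, hjz⟩ := mem_attachments.1 hj
    obtain ⟨l, hl⟩ := hH.connected.exists_path hy hz
    exact hf.not_adj_heads hH.notMem hij hl hiy hjz
  · intro u hu hxu
    obtain ⟨i, hi, rfl⟩ := Finset.mem_image.1 hu
    exact hH.add_one_notMem hf hi (mem_attachments.2 ⟨x, hx, hxu.symm⟩)

end IndependentHeads

/-- `A` and `B` cover the vertices outside `S` and no edge joins them. -/
structure Separation (G : SimpleGraph V) (S A B : Finset V) : Prop where
  left_nonempty : A.Nonempty
  right_nonempty : B.Nonempty
  cover : ∀ v, v ∈ S ∨ v ∈ A ∨ v ∈ B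
  not_adj : ∀ a ∈ A, ∀ b ∈ B, ¬ G.Adj a b

theorem Separation.symm {G : SimpleGraph V} {S A B : Finset V} (h : Separation G S A B) :
    Separation G S B A :=
  ⟨h.right_nonempty, h.left_nonempty, fun v => (h.cover v).imp_right Or.symm,
    fun a ha b hb hab => h.not_adj b hb a ha hab.symm⟩

/-- The edge `x y` is a component outside the longest cycle `f` and both its ends are attached to
the cycle at exactly the positions in `M`. -/
structure TwinComponent (G : SimpleGraph V) {c : ℕ} (f : ZMod c → V) (M : Finset (ZMod c))
    (x y : V) : Prop where
  longest : LongestCycleMap G f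
  adj : G.Adj x y
  ne_left : ∀ i, f i ≠ x
  ne_right : ∀ i, f i ≠ y
  adj_left : ∀ i, G.Adj (f i) x ↔ i ∈ M
  adj_right : ∀ i, G.Adj (f i) y ↔ i ∈ M
  closed : ∀ v, G.Adj x v → v = y ∨ ∃ i, f i = v

namespace TwinComponent

variable {G : SimpleGraph V} {c : ℕ} {f : ZMod c → V} {M : Finset (ZMod c)} {x y : V}
  {i j : ZMod c}

theorem reverse (h : TwinComponent G f M x y) :
    TwinComponent G (fun i => f (-i)) (M.map (Equiv.neg _).toEmbedding) x y := by
  refine ⟨h.longest.reverse, h.adj, fun i => h.ne_left _, fun i => h.ne_right _, fun i => ?_,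
    fun i => ?_, fun v hv => (h.closed v hv).imp_right fun ⟨i, hi⟩ => ⟨-i, by simpa using hi⟩⟩
  · rw [h.adj_left, Finset.mem_map_equiv]; rfl
  · rw [h.adj_right, Finset.mem_map_equiv]; rfl

theorem neg_mem_reverse (hi : i ∈ M) : -i ∈ M.map (Equiv.neg (ZMod c)).toEmbedding :=
  Finset.mem_map_of_mem (Equiv.neg (ZMod c)).toEmbedding hi

theorem isPathIn [DecidableEq V] (h : TwinComponent G f M x y) :
    IsPathIn G {x, y} [x, y] x y :=
  ⟨by simp [h.adj.ne], by simp [h.adj], by simp, by simp, by simp⟩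

theorem notMem_pair [DecidableEq V] (h : TwinComponent G f M x y) (i : ZMod c) :
    f i ∉ ({x, y} : Finset V) := by
  simp [h.ne_left, h.ne_right]

theorem three_le [DecidableEq V] (h : TwinComponent G f M x y) {d : ℕ} (hd : 1 ≤ d) (hdc : d < c)
    (hi : i ∈ M) (hj : i + d ∈ M) : 3 ≤ d :=
  h.longest.length_add_one_le hd hdc h.notMem_pair h.isPathIn ((h.adj_left i).2 hi)
    ((h.adj_right _).2 hj)

theorem add_one_notMem (h : TwinComponent G f M x y) (hi : i ∈ M) : i + 1 ∉ M := fun hj => by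
  classical
  have := h.three_le (d := 1) le_rfl (by have := h.longest.three_le; omega) hi (by simpa using hj)
  omega

theorem add_two_notMem (h : TwinComponent G f M x y) (hi : i ∈ M) : i + 2 ∉ M := fun hj => by
  classical
  have := h.three_le (d := 2) (by omega) (by have := h.longest.three_le; omega) hi
    (by simpa using hj)
  omega

theorem not_adj_add_one (h : TwinComponent G f M x y) (hi : i ∈ M) (hj : j ∈ M) :
    ¬ G.Adj (f (i + 1)) (f (j + 1)) := by
  classical
  by_cases hij : i = j
  · rw [hij]
    exact G.irrefl
  · exact h.longest.not_adj_heads h.notMem_pair hij h.isPathIn ((h.adj_left i).2 hi)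
      ((h.adj_right j).2 hj)

theorem not_adj_add_two (h : TwinComponent G f M x y) (hi : i ∈ M) (hj : j ∈ M) (hij : i ≠ j) :
    ¬ G.Adj (f (i + 1)) (f (j + 2)) := by
  classical
  have := h.longest.neZero
  intro hadj
  obtain ⟨d, hd, hdc, rfl⟩ := ZMod.exists_eq_add_natCast_of_ne hij
  have hdc2 : d + 2 ≤ c := by
    by_contra hlt
    refine h.add_one_notMem hj ?_
    have e : ((d + 1 : ℕ) : ZMod c) = 0 := by
      rw [show d + 1 = c by omega, ZMod.natCast_self]
    push_cast at e
    rwa [add_assoc, e, add_zero]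
  have := h.longest.crossing_le (q := []) le_rfl hd (by omega) hdc2 h.notMem_pair h.isPathIn
    ((h.adj_left i).2 hi) ((h.adj_right _).2 hj) (by simp) (by simp) (by simp)
    (by simpa [add_assoc] using hadj)
  simp at this

theorem not_adj_sub_two (h : TwinComponent G f M x y) (hi : i ∈ M) (hj : j ∈ M) (hij : i ≠ j) :
    ¬ G.Adj (f (i - 1)) (f (j - 2)) := by
  have := h.reverse.not_adj_add_two (neg_mem_reverse hi) (neg_mem_reverse hj)
    (fun e => hij (neg_injective e))
  simpa [sub_eq_add_neg, add_comm] using this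

theorem three_mul_card_le (h : TwinComponent G f M x y) : 3 * M.card ≤ c := by
  have := h.longest.neZero
  have := sum_le_of_cyclic_gaps M (fun _ => 3) fun i hi t ht hlt => by
    interval_cases t
    · simpa using h.add_one_notMem hi
    · simpa using h.add_two_notMem hi
  rwa [Finset.sum_const, smul_eq_mul, mul_comm] at this

/-- There are at least `4 |M| - c` segments of length three between attachments. -/
theorem four_mul_card_le (h : TwinComponent G f M x y) :
    4 * M.card ≤ c + (M.filter fun i => i + 3 ∈ M).card := by
  have := h.longest.neZero
  have := sum_le_of_cyclic_gaps M (fun i => if i + 3 ∈ M then 3 else 4) fun i hi t ht hlt => by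
    have : t < 4 := hlt.trans_le (by split_ifs <;> omega)
    interval_cases t
    · simpa using h.add_one_notMem hi
    · simpa using h.add_two_notMem hi
    · intro h3
      rw [if_pos (by simpa using h3)] at hlt
      omega
  rw [Finset.sum_ite, Finset.sum_const, Finset.sum_const, smul_eq_mul, smul_eq_mul] at this
  have hc := Finset.card_filter_add_card_filter_not (s := M) (fun i => i + 3 ∈ M)
  omega

variable [DecidableEq V]

theorem eq_or_eq_of_notMem (h : TwinComponent G f M x y)
    (hα : ∀ s : Finset V, (∀ u ∈ s, ∀ v ∈ s, ¬ G.Adj u v) → s.card ≤ M.card + 1) {z : V}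
    (hz : ∀ i, f i ≠ z) : z = x ∨ z = y := by
  by_contra! hne
  have hinj : Function.Injective fun i => f (i + 1) :=
    fun i j e => add_right_cancel (h.longest.injective e)
  have hxz : ¬ G.Adj x z := fun hadj => by
    rcases h.closed z hadj with e | ⟨i, hi⟩
    exacts [hne.2 e, hz i hi]
  have hzW : ∀ j, f j ∉ ({z} : Finset V) := fun j => by simpa using hz j
  have hheads : ∀ N ⊆ M, ∀ u ∈ N.image (fun i => f (i + 1)), ∀ w ∈ N.image (fun i => f (i + 1)),
      ¬ G.Adj u w := by
    intro N hN u hu w hw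
    obtain ⟨i, hi, rfl⟩ := Finset.mem_image.1 hu
    obtain ⟨j, hj, rfl⟩ := Finset.mem_image.1 hw
    exact h.not_adj_add_one (hN hi) (hN hj)
  by_cases hex : ∃ i ∈ M, G.Adj (f (i + 1)) z
  · obtain ⟨i, hi, hiz⟩ := hex
    have := hα (insert x (insert z (insert (f (i + 2)) ((M.erase i).image fun i => f (i + 1)))))
      (indep_insert (indep_insert (indep_insert (hheads _ (Finset.erase_subset _ _)) ?_) ?_) ?_)
    · rw [Finset.card_insert_of_notMem, Finset.card_insert_of_notMem, Finset.card_insert_of_notMem,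
        Finset.card_image_of_injective _ hinj, Finset.card_erase_of_mem hi] at this
      · have := Finset.card_pos.2 ⟨i, hi⟩
        omega
      · intro hm
        obtain ⟨j, hj, e⟩ := Finset.mem_image.1 hm
        have e := h.longest.injective e
        refine h.add_one_notMem hi ?_
        rw [show i + 1 = j from add_right_cancel (by rw [e]; ring)]
        exact Finset.mem_of_mem_erase hj
      · simp [(hz _).symm, hz]
      · simp [h.ne_left, (h.ne_left _).symm, hne.1.symm]
    · intro u hu hadj
      obtain ⟨j, hj, rfl⟩ := Finset.mem_image.1 hu
      exact h.not_adj_add_two (Finset.mem_of_mem_erase hj) hi (Finset.ne_of_mem_erase hj) hadj.symm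
    · intro u hu hadj
      rcases Finset.mem_insert.1 hu with rfl | hu
      · have := h.longest.length_add_one_le (i := i + 1) (d := 1) le_rfl
          (by have := h.longest.three_le; omega) hzW
          (IsPathIn.singleton (by simp)) hiz (by
            rw [add_assoc, Nat.cast_one, one_add_one_eq_two]
            exact hadj.symm)
        simp at this
      · obtain ⟨j, hj, rfl⟩ := Finset.mem_image.1 hu
        obtain ⟨hji, hj⟩ := Finset.mem_erase.1 hj
        have := h.longest.neZero
        obtain ⟨d, hd, hdc, rfl⟩ := ZMod.exists_eq_add_natCast_of_ne hji.symm
        have := h.longest.crossing_le (q := [z]) (W := {x, y}) (l := [x]) le_rfl hd le_rfl hdc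
          h.notMem_pair (IsPathIn.singleton (by simp)) ((h.adj_left i).2 hi) ((h.adj_left _).2 hj)
          (by simp) (by simpa using hz) (by simpa using hne.1)
          (by simpa [hiz, add_assoc] using hadj)
        simp at this
    · intro u hu hadj
      rcases Finset.mem_insert.1 hu with rfl | hu
      · exact hxz hadj
      rcases Finset.mem_insert.1 hu with rfl | hu
      · exact h.add_two_notMem hi ((h.adj_left _).1 hadj.symm)
      · obtain ⟨j, hj, rfl⟩ := Finset.mem_image.1 hu
        exact h.add_one_notMem (Finset.mem_of_mem_erase hj) ((h.adj_left _).1 hadj.symm)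
  · have := hα (insert x (insert z (M.image fun i => f (i + 1))))
      (indep_insert (indep_insert (hheads _ subset_rfl) ?_) ?_)
    · rw [Finset.card_insert_of_notMem, Finset.card_insert_of_notMem,
        Finset.card_image_of_injective _ hinj] at this
      · omega
      · simp [hz]
      · simp [h.ne_left, hne.1.symm]
    · intro u hu hadj
      obtain ⟨j, hj, rfl⟩ := Finset.mem_image.1 hu
      exact hex ⟨j, hj, hadj.symm⟩
    · intro u hu hadj
      rcases Finset.mem_insert.1 hu with rfl | hu
      · exact hxz hadj
      · obtain ⟨j, hj, rfl⟩ := Finset.mem_image.1 hu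
        exact h.add_one_notMem hj ((h.adj_left _).1 hadj.symm)

end TwinComponent

namespace TwinComponent

variable {G : SimpleGraph V} {c : ℕ} {f : ZMod c → V}
  {M : Finset (ZMod c)} {x y : V} {i j : ZMod c} {S A B : Finset V}

theorem exists_of_adj_add_one (h : TwinComponent G f M x y)
    (hoff : ∀ z, (∀ i, f i ≠ z) → z = x ∨ z = y) (hi : i ∈ M) {v : V}
    (hv : G.Adj (f (i + 1)) v) : ∃ m, f m = v ∧ ∀ a ∈ M, m ≠ a + 1 := by
  by_cases hm : ∃ m, f m = v
  · obtain ⟨m, rfl⟩ := hm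
    refine ⟨m, rfl, ?_⟩
    rintro a ha rfl
    exact h.not_adj_add_one hi ha hv
  · push Not at hm
    rcases hoff v hm with rfl | rfl
    · exact absurd ((h.adj_left _).1 hv) (h.add_one_notMem hi)
    · exact absurd ((h.adj_right _).1 hv) (h.add_one_notMem hi)

variable [DecidableEq V] [DecidableRel G.Adj] [Fintype V]

/-- The successors of the attachments on the cycle all lie on the same side of a small cut. -/
theorem head_notMem (h : TwinComponent G f M x y)
    (hoff : ∀ z, (∀ i, f i ≠ z) → z = x ∨ z = y)
    (hδ : ∀ v, M.card + 1 ≤ degIn G Finset.univ v) (hsep : Separation G S A B)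
    (hc : c + S.card < 4 * M.card) (hi : i ∈ M) (hj : j ∈ M) (hiA : f (i + 1) ∈ A) :
    f (j + 1) ∉ B := by
  intro hjB
  have := h.longest.neZero
  let X := M.image (· + 1) ∪ ((M.erase i).erase j).image (· + 2)
  have hX : M.card + M.card ≤ X.card + 2 := by
    rw [Finset.card_union_of_disjoint, Finset.card_image_of_injective _ (add_left_injective _),
      Finset.card_image_of_injective _ (add_left_injective _)]
    · have h1 := Finset.pred_card_le_card_erase (s := M) (a := i)
      have h2 := Finset.pred_card_le_card_erase (s := M.erase i) (a := j)
      omega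
    · rw [Finset.disjoint_left]
      intro m hm hm'
      obtain ⟨a, ha, rfl⟩ := Finset.mem_image.1 hm
      obtain ⟨b, hb, e⟩ := Finset.mem_image.1 hm'
      have hb := Finset.mem_of_mem_erase (Finset.mem_of_mem_erase hb)
      refine h.add_one_notMem hb ?_
      rwa [show b + 1 = a from add_right_cancel (b := 1) (by rw [← e]; ring)]
  have hXc : X.card + Xᶜ.card = c := by rw [Finset.card_add_card_compl, ZMod.card]
  have hunion : (Finset.univ.filter fun v => G.Adj (f (i + 1)) v) ∪
      (Finset.univ.filter fun v => G.Adj (f (j + 1)) v) ⊆ Xᶜ.image f := by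
    have key : ∀ a ∈ M, a = i ∨ a = j → ∀ v, G.Adj (f (a + 1)) v → v ∈ Xᶜ.image f := by
      intro a ha haij v hv
      obtain ⟨m, rfl, hm⟩ := h.exists_of_adj_add_one hoff ha hv
      refine Finset.mem_image_of_mem _ (Finset.mem_compl.2 fun hmX => ?_)
      rcases Finset.mem_union.1 hmX with hmX | hmX
      · obtain ⟨b, hb, rfl⟩ := Finset.mem_image.1 hmX
        exact hm b hb rfl
      · obtain ⟨b, hb, rfl⟩ := Finset.mem_image.1 hmX
        rw [Finset.mem_erase, Finset.mem_erase] at hb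
        refine h.not_adj_add_two ha hb.2.2 ?_ hv
        rcases haij with rfl | rfl
        exacts [hb.2.1.symm, hb.1.symm]
    intro v hv
    rw [Finset.mem_union, Finset.mem_filter, Finset.mem_filter] at hv
    rcases hv with hv | hv
    · exact key i hi (.inl rfl) v hv.2
    · exact key j hj (.inr rfl) v hv.2
  have hinter : (Finset.univ.filter fun v => G.Adj (f (i + 1)) v) ∩
      (Finset.univ.filter fun v => G.Adj (f (j + 1)) v) ⊆ S := by
    intro v hv
    rw [Finset.mem_inter, Finset.mem_filter, Finset.mem_filter] at hv
    rcases hsep.cover v with hS | hA | hB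
    · exact hS
    · exact absurd hv.2.2.symm (hsep.not_adj v hA _ hjB)
    · exact absurd hv.1.2 (hsep.not_adj _ hiA v hB)
  have h1 := (Finset.card_le_card hunion).trans Finset.card_image_le
  have h2 := Finset.card_le_card hinter
  have h3 := Finset.card_union_add_card_inter
    (Finset.univ.filter fun v => G.Adj (f (i + 1)) v)
    (Finset.univ.filter fun v => G.Adj (f (j + 1)) v)
  have h4 := hδ (f (i + 1))
  have h5 := hδ (f (j + 1))
  unfold degIn at h4 h5
  omega

theorem false_of_segment (h : TwinComponent G f M x y)
    (hoff : ∀ z, (∀ i, f i ≠ z) → z = x ∨ z = y)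
    (hδ : ∀ v, M.card + 1 ≤ degIn G Finset.univ v) (hsep : Separation G S A B)
    (hc : c + S.card < 4 * M.card) (hi : i ∈ M) (hi₃ : i + 3 ∈ M) (hiA : f (i + 1) ∈ A)
    (hiA₂ : f (i + 2) ∈ A) : False := by
  have := h.longest.neZero
  have hhead : ∀ j ∈ M, f (j + 1) ∉ B := fun j hj => h.head_notMem hoff hδ hsep hc hi hj hiA
  have htail : ∀ j ∈ M, f (j - 1) ∉ B := fun j hj => by
    have := h.reverse.head_notMem (i := -(i + 3)) (j := -j)
      (fun z hz => hoff z fun m hm => hz (-m) (by simpa using hm)) (by simpa using hδ) hsep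
      (by simpa using hc) (neg_mem_reverse hi₃) (neg_mem_reverse hj)
      (by simpa [show -1 + (i + 3) = i + 2 by ring] using hiA₂)
    simpa [sub_eq_add_neg, add_comm] using this
  let X := M.image (· + 1) ∪ (M.erase (i + 3)).image (· - 1)
  have hX : M.card + M.card = X.card + 1 := by
    rw [Finset.card_union_of_disjoint, Finset.card_image_of_injective _ (add_left_injective _),
      Finset.card_image_of_injective _ (sub_left_injective), Finset.card_erase_of_mem hi₃]
    · have := Finset.card_pos.2 ⟨i, hi⟩
      omega
    · rw [Finset.disjoint_left]
      intro m hm hm'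
      obtain ⟨a, ha, rfl⟩ := Finset.mem_image.1 hm
      obtain ⟨b, hb, e⟩ := Finset.mem_image.1 hm'
      refine h.add_two_notMem ha ?_
      rw [show a + 2 = b by rw [← sub_add_cancel b 1, e]; ring]
      exact Finset.mem_of_mem_erase hb
  have hXc : X.card + Xᶜ.card = c := by rw [Finset.card_add_card_compl, ZMod.card]
  have hN : (Finset.univ.filter fun v => G.Adj (f (i + 1)) v) ⊆ Xᶜ.image f := by
    intro v hv
    have hv := (Finset.mem_filter.1 hv).2
    obtain ⟨m, rfl, hm⟩ := h.exists_of_adj_add_one hoff hi hv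
    refine Finset.mem_image_of_mem _ (Finset.mem_compl.2 fun hmX => ?_)
    rcases Finset.mem_union.1 hmX with hmX | hmX
    · obtain ⟨b, hb, rfl⟩ := Finset.mem_image.1 hmX
      exact hm b hb rfl
    · obtain ⟨b, hb, rfl⟩ := Finset.mem_image.1 hmX
      obtain ⟨hbi, hb⟩ := Finset.mem_erase.1 hb
      refine h.not_adj_sub_two hb hi₃ hbi ?_
      rw [show i + 3 - 2 = i + 1 by ring]
      exact hv.symm
  let D := (Finset.univ.filter fun m => f m ∈ B).image f
  have hD : D ⊆ Xᶜ.image f \ (Finset.univ.filter fun v => G.Adj (f (i + 1)) v) := by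
    intro v hv
    obtain ⟨m, hm, rfl⟩ := Finset.mem_image.1 hv
    have hm := (Finset.mem_filter.1 hm).2
    refine Finset.mem_sdiff.2 ⟨Finset.mem_image_of_mem _ (Finset.mem_compl.2 fun hmX => ?_),
      fun hadj => hsep.not_adj _ hiA _ hm (Finset.mem_filter.1 hadj).2⟩
    rcases Finset.mem_union.1 hmX with hmX | hmX
    · obtain ⟨b, hb, rfl⟩ := Finset.mem_image.1 hmX
      exact hhead b hb hm
    · obtain ⟨b, hb, rfl⟩ := Finset.mem_image.1 hmX
      exact htail b (Finset.mem_of_mem_erase hb) hm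
  have hDcard : D.card + S.card < M.card := by
    have h1 := Finset.card_le_card hD
    rw [Finset.card_sdiff_of_subset hN] at h1
    have h2 : Finset.card (Xᶜ.image f) ≤ _ := Finset.card_image_le
    have h3 := Finset.card_le_card hN
    have h4 := hδ (f (i + 1))
    unfold degIn at h4
    omega
  have hcovered : ∀ u ∈ B, ∀ m, G.Adj u (f m) → f m ∈ D ∪ S := by
    intro u hu m hadj
    rcases hsep.cover (f m) with hS | hA | hB
    · exact Finset.mem_union_right _ hS
    · exact absurd hadj.symm (hsep.not_adj _ hA u hu)
    · exact Finset.mem_union_left _ (Finset.mem_image_of_mem _ (by simpa using hB))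
  have hfM : ∀ u ∈ B, ¬ ∀ m ∈ M, G.Adj u (f m) := by
    intro u hu hadj
    have h1 : M.image f ⊆ D ∪ S := fun v hv => by
      obtain ⟨m, hm, rfl⟩ := Finset.mem_image.1 hv
      exact hcovered u hu m (hadj m hm)
    have h2 := (Finset.card_le_card h1).trans (Finset.card_union_le _ _)
    rw [Finset.card_image_of_injective _ h.longest.injective] at h2
    omega
  have hxB : x ∉ B := fun hx => hfM x hx fun m hm => ((h.adj_left m).2 hm).symm
  have hyB : y ∉ B := fun hy => hfM y hy fun m hm => ((h.adj_right m).2 hm).symm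
  obtain ⟨u, hu⟩ := hsep.right_nonempty
  have hN' : (Finset.univ.filter fun v => G.Adj u v) ⊆ D ∪ S := by
    intro v hv
    have hv := (Finset.mem_filter.1 hv).2
    by_cases hm : ∃ m, f m = v
    · obtain ⟨m, rfl⟩ := hm
      exact hcovered u hu m hv
    · push Not at hm
      rcases hsep.cover v with hS | hA | hB
      · exact Finset.mem_union_right _ hS
      · exact absurd hv.symm (hsep.not_adj _ hA u hu)
      · rcases hoff v hm with rfl | rfl
        · exact absurd hB hxB
        · exact absurd hB hyB
  have h1 := (Finset.card_le_card hN').trans (Finset.card_union_le _ _)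
  have h2 := hδ u
  unfold degIn at h2
  omega

/-- The circumference bound when some component outside the cycle is an edge with twin ends. -/
theorem four_mul_card_le_of_separation (h : TwinComponent G f M x y)
    (hα : ∀ s : Finset V, (∀ u ∈ s, ∀ v ∈ s, ¬ G.Adj u v) → s.card ≤ M.card + 1)
    (hδ : ∀ v, M.card + 1 ≤ degIn G Finset.univ v) (hsep : Separation G S A B) :
    4 * M.card ≤ c + S.card := by
  by_contra! hc
  have hoff : ∀ z, (∀ i, f i ≠ z) → z = x ∨ z = y := fun z hz => h.eq_or_eq_of_notMem hα hz
  have hcard := h.four_mul_card_le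
  obtain ⟨i, hi, hS₁, hS₂⟩ : ∃ i ∈ M.filter (fun i => i + 3 ∈ M), f (i + 1) ∉ S ∧ f (i + 2) ∉ S := by
    by_contra! hcon
    have hlt : S.card < (M.filter fun i => i + 3 ∈ M).card := by omega
    obtain ⟨i, hi, j, hj, hij, e⟩ := Finset.exists_ne_map_eq_of_card_lt_of_maps_to hlt
      (f := fun i => if f (i + 1) ∈ S then f (i + 1) else f (i + 2)) (fun i hi => by
        simp only [Finset.mem_coe] at hi ⊢
        split_ifs with h1
        · exact h1
        · exact hcon i hi h1)
    have hi := (Finset.mem_filter.1 hi).1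
    have hj := (Finset.mem_filter.1 hj).1
    split_ifs at e with h1 h2 h2
    · exact hij (add_right_cancel (h.longest.injective e))
    · have e := h.longest.injective e
      exact h.add_one_notMem hj
        ((show j + 1 = i from add_right_cancel (b := 1) (by rw [e]; ring)) ▸ hi)
    · have e := h.longest.injective e
      exact h.add_one_notMem hi
        ((show i + 1 = j from add_right_cancel (b := 1) (by rw [← e]; ring)) ▸ hj)
    · exact hij (add_right_cancel (h.longest.injective e))
  obtain ⟨hi, hi₃⟩ := Finset.mem_filter.1 hi
  have hadj : G.Adj (f (i + 1)) (f (i + 2)) := by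
    have := h.longest.adj (i + 1)
    rwa [add_assoc, one_add_one_eq_two] at this
  have h1 := (hsep.cover (f (i + 1))).resolve_left hS₁
  have h2 := (hsep.cover (f (i + 2))).resolve_left hS₂
  rcases h1 with h1 | h1 <;> rcases h2 with h2 | h2
  · exact h.false_of_segment hoff hδ hsep hc hi hi₃ h1 h2
  · exact hsep.not_adj _ h1 _ h2 hadj
  · exact hsep.not_adj _ h2 _ h1 hadj.symm
  · exact h.false_of_segment hoff hδ hsep.symm hc hi hi₃ h1 h2

end TwinComponent

section Assembly

variable {G : SimpleGraph V}

/-- The circumference bound in terms of a component outside a longest cycle. -/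
theorem OutsideComponent.four_mul_le [Fintype V] [DecidableEq V] [DecidableRel G.Adj] {c : ℕ}
    {f : ZMod c → V} {H : Finset V} (hH : OutsideComponent G f H) (hf : LongestCycleMap G f)
    (h4 : NoSmallCut G 4) {δ κ : ℕ} (hδ : ∀ v, δ ≤ degIn G Finset.univ v)
    (hα : ∀ s : Finset V, (∀ u ∈ s, ∀ v ∈ s, ¬ G.Adj u v) → s.card ≤ δ) (hκ : 4 ≤ κ)
    (hsep : κ + 1 < Fintype.card V → ∃ S A B, S.card ≤ κ ∧ Separation G S A B) :
    4 * δ ≤ c + κ + 4 := by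
  have := hf.neZero
  by_cases hns : ∀ b ∈ H, SetConnected G (H.erase b)
  swap
  · push Not at hns
    obtain ⟨b, hb, hcut⟩ := hns
    have := hH.four_mul_le_of_cut hf h4 hδ hb hcut
    omega
  by_cases hcard : 3 ≤ H.card
  · have := hH.four_mul_le_of_no_cut hf h4 hδ hcard hns
    omega
  have hk := hH.card_attachments_lt hf hα
  have hsub : ∀ v ∈ H, attachments G f {v} ⊆ attachments G f H := fun v hv =>
    attachments_mono (Finset.singleton_subset_iff.2 hv)
  have hdeg : ∀ v ∈ H, degIn G H v ≤ H.card - 1 := fun v hv => by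
    rw [← Finset.card_erase_of_mem hv]
    refine Finset.card_le_card fun u hu => ?_
    obtain ⟨hu, hadj⟩ := Finset.mem_filter.1 hu
    exact Finset.mem_erase.2 ⟨hadj.ne', hu⟩
  have hδk : ∀ v ∈ H, δ ≤ H.card - 1 + (attachments G f {v}).card := fun v hv =>
    (hδ v).trans ((hH.degree_le hv).trans (Nat.add_le_add_right (hdeg v hv) _))
  have hatt : ∀ v ∈ H, attachments G f {v} = attachments G f H := fun v hv =>
    Finset.eq_of_subset_of_card_le (hsub v hv) (by have := hδk v hv; omega)
  obtain ⟨z, hz⟩ := hH.nonempty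
  have hδz := hδk z hz
  rw [hatt z hz] at hδz
  obtain ⟨x, y, hxy, rfl⟩ := Finset.card_eq_two.1 (show H.card = 2 by omega)
  rw [Finset.card_pair hxy] at hδz
  have hadj : ∀ v ∈ ({x, y} : Finset V), ∀ i, G.Adj (f i) v ↔ i ∈ attachments G f {x, y} :=
    fun v hv i => by rw [← hatt v hv, mem_attachments]; simp
  have hx : x ∈ ({x, y} : Finset V) := by simp
  have hy : y ∈ ({x, y} : Finset V) := by simp
  have htwin : TwinComponent G f (attachments G f {x, y}) x y := by
    refine ⟨hf, ?_, fun i h => hH.notMem i (h ▸ hx), fun i h => hH.notMem i (h ▸ hy), hadj x hx,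
      hadj y hy, fun v hv => ?_⟩
    · obtain ⟨v, hv⟩ := Finset.card_pos.1 (degIn_pos hH.connected hx hy hxy)
      obtain ⟨hv, hxv⟩ := Finset.mem_filter.1 hv
      rcases Finset.mem_insert.1 hv with rfl | hv
      · exact absurd hxv G.irrefl
      · exact Finset.mem_singleton.1 hv ▸ hxv
    · rcases hH.closed x hx v hv with h | h
      · rcases Finset.mem_insert.1 h with rfl | h
        · exact absurd hv G.irrefl
        · exact .inl (Finset.mem_singleton.1 h)
      · exact .inr h
  obtain rfl : δ = (attachments G f {x, y}).card + 1 := by omega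
  have h3 := htwin.three_mul_card_le
  have hcV := Fintype.card_le_of_injective f hf.injective
  rw [ZMod.card] at hcV
  by_contra! hlt
  obtain ⟨S, A, B, hS, hsep⟩ := hsep (by omega)
  have := htwin.four_mul_card_le_of_separation hα hδ hsep
  omega

theorem KConnected.noSmallCut [Fintype V] {k : ℕ} (h : KConnected G k) : NoSmallCut G k := by
  intro S hS X ⟨u, hu, huS⟩ ⟨v, hv, hvS⟩
  obtain ⟨p⟩ := (h.2 S hS).preconnected ⟨u, by simpa using huS⟩ ⟨v, by simpa using hvS⟩
  obtain ⟨d, -, h₁, h₂⟩ := p.exists_boundary_dart {w | (w : V) ∈ X} hu hv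
  exact ⟨_, h₁, _, fun hm => d.fst.2 (Finset.mem_coe.2 hm), h₂,
    fun hm => d.snd.2 (Finset.mem_coe.2 hm), d.adj⟩

theorem exists_separation_of_not_kConnected [Fintype V] {k : ℕ} (hk : k < Fintype.card V)
    (h : ¬ KConnected G k) : ∃ S A B, S.card < k ∧ Separation G S A B := by
  classical
  unfold KConnected at h
  push Not at h
  obtain ⟨S, hS, hcon⟩ := h hk
  have hne : Nonempty ((↑S : Set V)ᶜ : Set V) := by
    obtain ⟨v, -, hv⟩ := Finset.exists_mem_notMem_of_card_lt_card
      (show S.card < (Finset.univ : Finset V).card from hS.trans hk)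
    exact ⟨v, by simpa using hv⟩
  have hpre : ¬ (G.induce ((↑S : Set V)ᶜ)).Preconnected := fun h => hcon ⟨h⟩
  unfold Preconnected at hpre
  push Not at hpre
  obtain ⟨a, b, hab⟩ := hpre
  refine ⟨S, Finset.univ.filter fun v => ∃ hv, (G.induce ((↑S : Set V)ᶜ)).Reachable a ⟨v, hv⟩,
    Finset.univ.filter fun v => ∃ hv, ¬ (G.induce ((↑S : Set V)ᶜ)).Reachable a ⟨v, hv⟩, hS,
    ⟨a, Finset.mem_filter.2 ⟨Finset.mem_univ _, a.2, Reachable.refl _⟩⟩,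
    ⟨b, Finset.mem_filter.2 ⟨Finset.mem_univ _, b.2, hab⟩⟩, fun v => ?_, fun u hu v hv huv => ?_⟩
  · by_cases hv : v ∈ S
    · exact .inl hv
    · simp only [Finset.mem_filter, Finset.mem_univ, true_and]
      have hv' : v ∈ ((↑S : Set V)ᶜ) := by simpa using hv
      by_cases hr : (G.induce ((↑S : Set V)ᶜ)).Reachable a ⟨v, hv'⟩
      · exact .inr (.inl ⟨hv', hr⟩)
      · exact .inr (.inr ⟨hv', hr⟩)
  · obtain ⟨hu, hau⟩ := (Finset.mem_filter.1 hu).2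
    obtain ⟨hv, hav⟩ := (Finset.mem_filter.1 hv).2
    exact hav (hau.trans (Adj.reachable (G := G.induce _) huv))

theorem KConnected.le_connectivity [Fintype V] {k : ℕ} (h : KConnected G k) :
    k ≤ connectivity G :=
  le_csSup ⟨Fintype.card V, fun _ hm => hm.1.le⟩ h

theorem card_le_indepNumber [Fintype V] {s : Finset V}
    (hs : ∀ u ∈ s, ∀ v ∈ s, ¬ G.Adj u v) : s.card ≤ indepNumber G :=
  le_csSup ⟨Fintype.card V, by rintro _ ⟨t, -, rfl⟩; exact t.card_le_univ⟩ ⟨s, hs, rfl⟩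

theorem NoSmallCut.exists_isCycle [Fintype V] (h : NoSmallCut G 4) (hcard : 4 < Fintype.card V) :
    ∃ (v : V) (w : G.Walk v v), w.IsCycle := by
  classical
  have : Nontrivial V := Fintype.one_lt_card_iff_nontrivial.1 (by omega)
  by_contra! hcon
  have hpre : G.Preconnected := fun u v => by
    by_contra huv
    obtain ⟨a, ha, b, -, hb, -, hab⟩ := h ∅ (by simp) (Finset.univ.filter fun w => G.Reachable u w)
      ⟨u, by simp⟩ ⟨v, by simpa using huv⟩
    simp only [Finset.mem_filter, Finset.mem_univ, true_and] at ha hb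
    exact hb (ha.trans hab.reachable)
  have htree : G.IsTree := ⟨⟨hpre⟩, fun v w => hcon v w⟩
  obtain ⟨v, hv⟩ := G.exists_minimal_degree_vertex
  rw [htree.minDegree_eq_one_of_nontrivial, eq_comm, degree_eq_one_iff_existsUnique_adj] at hv
  obtain ⟨w, hvw, hw⟩ := hv
  obtain ⟨z, -, hz⟩ := Finset.exists_mem_notMem_of_card_lt_card
    (show ({v, w} : Finset V).card < (Finset.univ : Finset V).card from
      Finset.card_le_two.trans_lt (by rw [Finset.card_univ]; omega))
  obtain ⟨a, ha, b, -, -, hb, hab⟩ := h {w} (by simp) {v} ⟨v, by simp, by simpa using hvw.ne⟩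
    ⟨z, by simp_all, by simp_all⟩
  rw [Finset.mem_singleton] at ha hb
  exact hb (hw b (ha ▸ hab))

theorem exists_isCycle_of_list {l : List V} (hl : l.Nodup) (hc : l.IsChain G.Adj)
    (h3 : 3 ≤ l.length) (hclose : ∀ x ∈ l.head?, ∀ y ∈ l.getLast?, G.Adj y x) :
    ∃ (v : V) (w : G.Walk v v), w.IsCycle ∧ w.length = l.length := by
  have hne : l ≠ [] := fun h => by simp [h] at h3
  have hadj := hclose _ (List.head?_eq_some_head hne) _ (List.getLast?_eq_some_getLast hne)
  refine ⟨_, Walk.cons hadj (Walk.ofSupport l hne hc), ?_, by simp; omega⟩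
  have hp : (Walk.ofSupport l hne hc).IsPath := by
    rw [Walk.isPath_def, Walk.support_ofSupport]
    exact hl
  refine (Walk.cons_isCycle_iff _ _).2 ⟨hp, fun h => ?_⟩
  have := hp.length_eq_one_of_mem_edges (Sym2.eq_swap ▸ h)
  rw [Walk.length_ofSupport] at this
  omega

theorem length_le_card_of_isCycle [Fintype V] {v : V} {w : G.Walk v v} (hw : w.IsCycle) :
    w.length ≤ Fintype.card V := by
  have := hw.support_nodup.length_le_card
  simpa using this

theorem exists_longestCycleMap [Fintype V] (h : ∃ (v : V) (w : G.Walk v v), w.IsCycle) :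
    ∃ f : ZMod (circumference G) → V, LongestCycleMap G f := by
  have hbdd : BddAbove {n | ∃ (v : V) (w : G.Walk v v), w.IsCycle ∧ w.length = n} :=
    ⟨Fintype.card V, by rintro _ ⟨v, w, hw, rfl⟩; exact length_le_card_of_isCycle hw⟩
  obtain ⟨v, w, hw, hlen⟩ : ∃ (v : V) (w : G.Walk v v), w.IsCycle ∧ w.length = circumference G :=
    Nat.sSup_mem (by obtain ⟨v, w, hw⟩ := h; exact ⟨_, v, w, hw, rfl⟩) hbdd
  have hlongest : ∀ l : List V, l.Nodup → l.IsChain G.Adj → 3 ≤ l.length →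
      (∀ x ∈ l.head?, ∀ y ∈ l.getLast?, G.Adj y x) → l.length ≤ circumference G :=
    fun l hl hc h3 hclose => le_csSup hbdd (exists_isCycle_of_list hl hc h3 hclose)
  generalize circumference G = c at *
  subst hlen
  have h3 := hw.three_le_length
  have : NeZero w.length := ⟨by omega⟩
  have : Fact (1 < w.length) := ⟨by omega⟩
  refine ⟨fun i => w.getVert i.val, h3, fun i j hij => ?_, fun i => ?_, hlongest⟩
  · have hi := i.val_lt
    have hj := j.val_lt
    exact ZMod.val_injective _ (hw.getVert_injOn' (by simp; omega) (by simp; omega) hij)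
  · have hi := i.val_lt
    have hadj := w.adj_getVert_succ hi
    have hval : (i + 1).val = (i.val + 1) % w.length := by rw [ZMod.val_add, ZMod.val_one]
    rcases (show i.val + 1 ≤ w.length from hi).eq_or_lt with e | e
    · rw [e, Walk.getVert_length] at hadj
      rwa [hval, e, Nat.mod_self, Walk.getVert_zero]
    · rwa [hval, Nat.mod_eq_of_lt e]

end Assembly

theorem nikoghosyan_2011_circumference (G : SimpleGraph V) [Fintype V] [DecidableRel G.Adj]
    (h4 : KConnected G 4)
    (hα : indepNumber G ≤ G.minDegree) :
    (circumference G : ℤ) ≥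
      min (Fintype.card V : ℤ) (4 * G.minDegree - connectivity G - 4) := by
  classical
  obtain ⟨f, hf⟩ := exists_longestCycleMap (h4.noSmallCut.exists_isCycle h4.1)
  by_cases hsurj : Function.Surjective f
  · have := hf.neZero
    have := Fintype.card_le_of_surjective f hsurj
    rw [ZMod.card] at this
    exact (min_le_left _ _).trans (by exact_mod_cast this)
  · obtain ⟨v₀, hv₀⟩ := not_forall.1 hsurj
    push Not at hv₀
    obtain ⟨H, hH⟩ := exists_outsideComponent (G := G) hv₀
    have := hH.four_mul_le hf h4.noSmallCut
      (fun v => (G.minDegree_le_degree v).trans_eq (by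
        rw [degIn, ← card_neighborFinset_eq_degree, neighborFinset_eq_filter]))
      (fun s hs => (card_le_indepNumber hs).trans hα) h4.le_connectivity fun hκ => by
        obtain ⟨S, A, B, hS, hsep⟩ := exists_separation_of_not_kConnected (G := G) hκ
          fun h => absurd h.le_connectivity (by omega)
        exact ⟨S, A, B, by omega, hsep⟩
    refine (min_le_right _ _).trans ?_
    omega
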